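/- arXiv:1805.08188 — 3 statements merged into one kernel-verified Lean document; each statement's English description precedes it below -/
import Mathlib

section
/- Let H be a complex separable infinite-dimensional Hilbert space and 𝒯 = (T_1, …, T_n) an n-tuple of bounded operators on H. Then the following three sets coincide: (i) the intersection over all n-tuples 𝒦 of compact operators on H of the joint numerical ranges W(𝒯 + 𝒦); (ii) the intersection over all n-tuples 𝒦 of compact operators on H of the constant-diagonal sets D_const(𝒯 + 𝒦); (iii) the interior in ℂ^n of W_e(𝒯). -/
open Filter Metric
open scoped ComplexInnerProductSpace

/-- The joint numerical range of a tuple of bounded operators. -/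
def jointNumRange {H : Type*} [NormedAddCommGroup H] [InnerProductSpace ℂ H]
    {n : ℕ} (T : Fin n → H →L[ℂ] H) : Set (Fin n → ℂ) :=
  {lam | ∃ x : H, ‖x‖ = 1 ∧ ∀ j, ⟪(T j) x, x⟫ = lam j}

/-- The joint essential numerical range of a tuple of bounded operators. -/
def jointEssNumRange {H : Type*} [NormedAddCommGroup H] [InnerProductSpace ℂ H]
    {n : ℕ} (T : Fin n → H →L[ℂ] H) : Set (Fin n → ℂ) :=
  {lam | ∃ x : ℕ → H, Orthonormal ℂ x ∧
    ∀ j, Tendsto (fun k => ⟪(T j) (x k), x k⟫) atTop (nhds (lam j))}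

/-- The constant-diagonal set of a tuple of bounded operators. -/
def constDiag {H : Type*} [NormedAddCommGroup H] [InnerProductSpace ℂ H]
    [CompleteSpace H] {n : ℕ} (T : Fin n → H →L[ℂ] H) : Set (Fin n → ℂ) :=
  {lam | ∃ u : HilbertBasis ℕ ℂ H, ∀ k j, ⟪(T j) (u k), u k⟫ = lam j}

section Helpers
variable {H : Type*} [NormedAddCommGroup H] [InnerProductSpace ℂ H]

/-- Orthonormal sequences are weakly null. -/
lemma ortho_inner_tendsto {x : ℕ → H} (hx : Orthonormal ℂ x) (f : H) :
    Tendsto (fun k => ⟪x k, f⟫) atTop (nhds 0) := by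
  have h := (hx.inner_products_summable f).tendsto_atTop_zero
  rw [tendsto_zero_iff_norm_tendsto_zero]
  have h2 := h.sqrt
  simpa [Real.sqrt_sq] using h2

/-- Compact operators map orthonormal sequences to null sequences. -/
lemma compact_ortho_tendsto [CompleteSpace H] {x : ℕ → H} (hx : Orthonormal ℂ x)
    {K : H →L[ℂ] H} (hK : IsCompactOperator K) :
    Tendsto (fun k => K (x k)) atTop (nhds 0) := by
  apply tendsto_of_subseq_tendsto
  intro ns hns
  obtain ⟨C, hC, hsub⟩ := hK.image_closedBall_subset_compact (f := (K : H →ₗ[ℂ] H)) 1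
  have hmem : ∀ k, K (x (ns k)) ∈ C := fun k =>
    hsub ⟨x (ns k), by simp [hx.1 (ns k)], rfl⟩
  obtain ⟨y, _, φ, hφ, hy⟩ := hC.tendsto_subseq hmem
  refine ⟨φ, ?_⟩
  have h1 : Tendsto (fun k => ⟪K (x (ns (φ k))), y⟫) atTop (nhds ⟪y, y⟫) :=
    hy.inner tendsto_const_nhds
  have h2 : Tendsto (fun k => ⟪K (x (ns (φ k))), y⟫) atTop (nhds 0) := by
    have := ((ortho_inner_tendsto hx (ContinuousLinearMap.adjoint K y)).comp hns).comp
      hφ.tendsto_atTop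
    simpa [Function.comp_def, ContinuousLinearMap.adjoint_inner_right] using this
  have h3 : y = 0 := inner_self_eq_zero.1 (tendsto_nhds_unique h1 h2)
  subst h3
  exact hy

lemma compact_of_fin_range {K : H →L[ℂ] H} (V : Submodule ℂ H) [FiniteDimensional ℂ V]
    (h : ∀ x, K x ∈ V) : IsCompactOperator K := by
  let K' : H →L[ℂ] V := K.codRestrict V h
  have h1 : IsCompactOperator V.subtypeL := by
    have : ProperSpace V := FiniteDimensional.proper ℂ V
    refine ⟨closedBall (0 : H) 1 ∩ V, ?_, ?_⟩
    · have := (isCompact_closedBall (0 : V) 1).image V.subtypeL.continuous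
      convert this using 1
      ext x
      simp
    · filter_upwards [closedBall_mem_nhds (0 : V) one_pos] with v hv
      exact ⟨by simpa using hv, v.2⟩
  have h2 := h1.comp_clm K'
  exact h2

/-- Approximation of points of the essential numerical range orthogonally to a given
finite-dimensional subspace. -/
lemma approx_ess [CompleteSpace H] {n : ℕ} {T : Fin n → H →L[ℂ] H} {lam : Fin n → ℂ}
    (hl : lam ∈ jointEssNumRange T) (V : Submodule ℂ H) [FiniteDimensional ℂ V]
    {ε : ℝ} (hε : 0 < ε) :
    ∃ z ∈ Vᗮ, ‖z‖ = 1 ∧ ∀ j, ‖⟪T j z, z⟫ - lam j‖ < ε := by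
  obtain ⟨x, hx, hT⟩ := hl
  set P := V.starProjection
  have hP : Tendsto (fun k => P (x k)) atTop (nhds 0) :=
    compact_ortho_tendsto hx (compact_of_fin_range V (fun x => V.starProjection_apply_mem x))
  set y : ℕ → H := fun k => x k - P (x k) with hydef
  have hyV : ∀ k, y k ∈ Vᗮ := fun k => V.sub_starProjection_mem_orthogonal (x k)
  have hyx : Tendsto (fun k => ‖y k - x k‖) atTop (nhds 0) := by
    simpa [hydef] using hP.norm
  have hnorm : Tendsto (fun k => ‖y k‖) atTop (nhds 1) := by
    rw [tendsto_iff_dist_tendsto_zero]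
    refine squeeze_zero (fun _ => dist_nonneg) (fun k => ?_) hyx
    have := abs_norm_sub_norm_le (y k) (x k)
    rw [hx.1 k] at this
    simpa [Real.dist_eq] using this
  have hTy : ∀ j, Tendsto (fun k => ⟪T j (y k), y k⟫) atTop (nhds (lam j)) := by
    intro j
    have h1 : Tendsto (fun k => ⟪T j (P (x k)), x k⟫) atTop (nhds 0) := by
      have h0 : Tendsto (fun k => ‖T j (P (x k))‖) atTop (nhds 0) := by
        simpa using (((T j).continuous.tendsto 0).comp hP).norm
      refine squeeze_zero_norm (fun k => ?_) h0
      simpa [hx.1 k] using norm_inner_le_norm (𝕜 := ℂ) (T j (P (x k))) (x k)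
    have h2 : Tendsto (fun k => ⟪T j (y k), P (x k)⟫) atTop (nhds 0) := by
      have h0 : Tendsto (fun k => ‖T j‖ * ‖y k‖ * ‖P (x k)‖) atTop (nhds 0) := by
        simpa using (hnorm.const_mul ‖T j‖).mul hP.norm
      refine squeeze_zero_norm (fun k => ?_) h0
      refine (norm_inner_le_norm (𝕜 := ℂ) _ _).trans ?_
      gcongr
      exact (T j).le_opNorm _
    have h3 := ((hT j).sub h1).sub h2
    simp only [sub_zero] at h3
    refine h3.congr (fun k => ?_)
    simp only [hydef, map_sub, inner_sub_left, inner_sub_right]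
  have hz : ∀ j, Tendsto (fun k => ((‖y k‖ ^ 2 : ℝ) : ℂ)⁻¹ * ⟪T j (y k), y k⟫) atTop
      (nhds (lam j)) := by
    intro j
    have h1 : Tendsto (fun k => ((‖y k‖ ^ 2 : ℝ) : ℂ)⁻¹) atTop (nhds 1) := by
      have : Tendsto (fun k => ((‖y k‖ ^ 2 : ℝ) : ℂ)) atTop (nhds ((1 ^ 2 : ℝ) : ℂ)) :=
        (Complex.continuous_ofReal.tendsto _).comp (hnorm.pow 2)
      simpa using this.inv₀ (by simp)
    simpa using h1.mul (hTy j)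
  have hev : ∀ᶠ k in atTop, ∀ j,
      ‖((‖y k‖ ^ 2 : ℝ) : ℂ)⁻¹ * ⟪T j (y k), y k⟫ - lam j‖ < ε := by
    rw [eventually_all]
    intro j
    have := (hz j).eventually (ball_mem_nhds (lam j) hε)
    simpa [dist_eq_norm] using this
  have hev2 : ∀ᶠ k in atTop, 0 < ‖y k‖ := hnorm.eventually (lt_mem_nhds one_pos)
  obtain ⟨k, hk, hk2⟩ := (hev.and hev2).exists
  refine ⟨((‖y k‖ : ℂ)⁻¹) • y k, Submodule.smul_mem _ _ (hyV k), ?_, ?_⟩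
  · rw [norm_smul]
    simp [hk2.ne']
  · intro j
    have := hk j
    convert this using 3
    rw [map_smul, inner_smul_left, inner_smul_right, map_inv₀, Complex.conj_ofReal]
    push_cast
    ring

/-- General recursive selection against growing finite-dimensional subspaces. -/
lemma rec_select (P : ℕ → Submodule ℂ H → H → Prop) (E : H → Submodule ℂ H)
    (hE : ∀ z, FiniteDimensional ℂ (E z))
    (V₀ : Submodule ℂ H) [FiniteDimensional ℂ V₀]
    (hP : ∀ m (V : Submodule ℂ H), FiniteDimensional ℂ V → ∃ z, P m V z) :
    ∃ (V : ℕ → Submodule ℂ H) (z : ℕ → H), Monotone V ∧ V 0 = V₀ ∧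
      (∀ m : ℕ, FiniteDimensional ℂ ↥(V m)) ∧ (∀ m, P m (V m) (z m)) ∧
      (∀ i m, i < m → E (z i) ≤ V m) ∧
      ∀ W : Submodule ℂ H, V₀ ≤ W → (∀ m, E (z m) ≤ W) → ∀ m, V m ≤ W := by
  classical
  choose! g hg using hP
  let V : ℕ → Submodule ℂ H := fun m =>
    Nat.rec (motive := fun _ => Submodule ℂ H) V₀ (fun k W => W ⊔ E (g k W)) m
  have hV0 : V 0 = V₀ := rfl
  have hVs : ∀ m, V (m + 1) = V m ⊔ E (g m (V m)) := fun m => rfl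
  have hfd : ∀ m : ℕ, FiniteDimensional ℂ ↥(V m) := by
    intro m
    induction m with
    | zero => rw [hV0]; infer_instance
    | succ k ih =>
      rw [hVs]
      have := hE (g k (V k))
      infer_instance
  have hmono : Monotone V := monotone_nat_of_le_succ (fun m => by rw [hVs]; exact le_sup_left)
  refine ⟨V, fun m => g m (V m), hmono, hV0, hfd, fun m => hg m _ (hfd m), ?_, ?_⟩
  · intro i m him
    refine le_trans ?_ (hmono (Nat.succ_le_of_lt him))
    rw [Nat.succ_eq_add_one, hVs]
    exact le_sup_right
  · intro W hW hEW m
    induction m with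
    | zero => exact hW
    | succ k ih =>
      rw [hVs]
      exact sup_le ih (hEW k)

/-- Selecting a jointly `T`-orthogonal orthonormal sequence. -/
lemma seq_select [CompleteSpace H] {n : ℕ} {T : Fin n → H →L[ℂ] H}
    (V₀ : Submodule ℂ H) [FiniteDimensional ℂ V₀] (p : ℕ → Fin n → ℂ)
    (hp : ∀ i, p i ∈ jointEssNumRange T) (ε : ℕ → ℝ) (hε : ∀ i, 0 < ε i) :
    ∃ z : ℕ → H, Orthonormal ℂ z ∧ (∀ i, z i ∈ V₀ᗮ) ∧
      (∀ j i k, i ≠ k → ⟪T j (z i), z k⟫ = 0) ∧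
      ∀ i j, ‖⟪T j (z i), z i⟫ - p i j‖ < ε i := by
  let E : H → Submodule ℂ H := fun z => Submodule.span ℂ
    (insert z (Set.range (fun j => T j z) ∪ Set.range
      (fun j => ContinuousLinearMap.adjoint (T j) z)))
  have hE : ∀ z, FiniteDimensional ℂ ↥(E z) := fun z =>
    FiniteDimensional.span_of_finite ℂ
      (((Set.finite_range _).union (Set.finite_range _)).insert z)
  obtain ⟨V, z, hmono, hV0, -, hP, hEV, -⟩ := rec_select
    (fun m V z => z ∈ Vᗮ ∧ ‖z‖ = 1 ∧ ∀ j, ‖⟪T j z, z⟫ - p m j‖ < ε m) E hE V₀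
    (fun m V _ => by
      obtain ⟨z, h1, h2, h3⟩ := approx_ess (hp m) V (hε m)
      exact ⟨z, h1, h2, h3⟩)
  have hort : ∀ i k, i < k → ∀ w ∈ E (z i), ⟪w, z k⟫ = 0 := fun i k hik w hw =>
    (Submodule.mem_orthogonal _ _).1 (hP k).1 w (hEV i k hik hw)
  have m1 : ∀ i, z i ∈ E (z i) := fun i => Submodule.subset_span (by simp)
  have m2 : ∀ i j, T j (z i) ∈ E (z i) := fun i j => Submodule.subset_span (by simp)
  have m3 : ∀ i j, ContinuousLinearMap.adjoint (T j) (z i) ∈ E (z i) :=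
    fun i j => Submodule.subset_span (by simp)
  refine ⟨z, ⟨fun i => (hP i).2.1, ?_⟩, ?_, ?_, fun i => (hP i).2.2⟩
  · intro i k hik
    rcases lt_or_gt_of_ne hik with h | h
    · exact hort i k h _ (m1 i)
    · exact inner_eq_zero_symm.1 (hort k i h _ (m1 k))
  · intro i
    have := Submodule.orthogonal_le (hmono (Nat.zero_le i)) (hP i).1
    rwa [hV0] at this
  · intro j i k hik
    rcases lt_or_gt_of_ne hik with h | h
    · exact hort i k h _ (m2 i j)
    · have := inner_eq_zero_symm.1 (hort k i h _ (m3 k j))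
      rwa [ContinuousLinearMap.adjoint_inner_right] at this

/-- Robust representation of interior points as convex combinations. -/
lemma robust_hull {n : ℕ} {A : Set (Fin n → ℂ)} {μ : Fin n → ℂ} (hμ : μ ∈ interior A) :
    ∃ (p : ℕ → Fin n → ℂ) (ε : ℕ → ℝ), (∀ i, p i ∈ A) ∧ (∀ i, 0 < ε i) ∧
      ∀ q : ℕ → Fin n → ℂ, (∀ i j, ‖q i j - p i j‖ < ε i) → μ ∈ convexHull ℝ (Set.range q) := by
  obtain ⟨r, hr, hball⟩ := Metric.isOpen_iff.1 isOpen_interior μ hμ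
  have : Nonempty (ball μ r) := ⟨⟨μ, mem_ball_self hr⟩⟩
  let d : ℕ → ball μ r := TopologicalSpace.denseSeq (ball μ r)
  refine ⟨fun i => d i.unpair.1, fun i => 1 / ((i : ℝ) + 1),
    fun i => interior_subset (hball (d i.unpair.1).2), fun i => by positivity, ?_⟩
  intro q hq
  set C := convexHull ℝ (Set.range q) with hC
  have hCc : Convex ℝ C := convex_convexHull ℝ _
  have hcl : ball μ r ⊆ closure C := by
    intro x hx
    rw [Metric.mem_closure_iff]
    intro δ hδ
    obtain ⟨k, hk⟩ := (TopologicalSpace.denseRange_denseSeq (ball μ r)).exists_dist_lt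
      (⟨x, hx⟩ : ball μ r) (half_pos hδ)
    obtain ⟨m, hm⟩ := exists_nat_one_div_lt (half_pos hδ)
    refine ⟨q (Nat.pair k m), subset_convexHull ℝ _ ⟨_, rfl⟩, ?_⟩
    have h1 : dist x (d k : Fin n → ℂ) < δ / 2 := hk
    have h2 : dist (d k : Fin n → ℂ) (q (Nat.pair k m)) < δ / 2 := by
      rw [dist_comm, dist_pi_lt_iff (half_pos hδ)]
      intro j
      have h3 := hq (Nat.pair k m) j
      simp only [Nat.unpair_pair] at h3
      rw [dist_eq_norm]
      refine h3.trans (lt_of_le_of_lt ?_ hm)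
      have : (m : ℝ) ≤ (Nat.pair k m : ℕ) := by exact_mod_cast Nat.right_le_pair k m
      gcongr
    calc dist x (q (Nat.pair k m)) ≤ _ := dist_triangle _ (d k : Fin n → ℂ) _
      _ < δ := by linarith
  have hspan : affineSpan ℝ C = ⊤ := by
    have hcl2 : IsClosed (affineSpan ℝ C : Set (Fin n → ℂ)) :=
      AffineSubspace.closed_of_finiteDimensional _
    have hsub : ball μ r ⊆ (affineSpan ℝ C : Set (Fin n → ℂ)) :=
      hcl.trans (closure_minimal (subset_affineSpan ℝ C) hcl2)
    have h1 : affineSpan ℝ (ball μ r) = ⊤ :=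
      isOpen_ball.affineSpan_eq_top ⟨μ, mem_ball_self hr⟩
    rw [eq_top_iff, ← h1]
    exact affineSpan_le.2 hsub
  have hne : (interior C).Nonempty := hCc.interior_nonempty_iff_affineSpan_eq_top.2 hspan
  have h2 : μ ∈ interior (closure C) :=
    interior_maximal hcl isOpen_ball (mem_ball_self hr)
  rw [hCc.interior_closure_eq_interior_of_nonempty_interior hne] at h2
  exact interior_subset h2

/-- Diagonal quadratic forms. -/
lemma inner_comb {z : ℕ → H} (S : H →L[ℂ] H) (s : Finset ℕ) (a : ℕ → ℝ)
    (h : ∀ i k, i ≠ k → ⟪S (z i), z k⟫ = 0) :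
    ⟪S (∑ i ∈ s, (a i : ℂ) • z i), ∑ i ∈ s, (a i : ℂ) • z i⟫
      = ∑ i ∈ s, ((a i ^ 2 : ℝ) : ℂ) * ⟪S (z i), z i⟫ := by
  rw [map_sum, sum_inner]
  refine Finset.sum_congr rfl (fun i hi => ?_)
  rw [inner_sum, Finset.sum_eq_single_of_mem i hi]
  · rw [map_smul, inner_smul_left, inner_smul_right, Complex.conj_ofReal]
    push_cast
    ring
  · intro k _ hk
    rw [map_smul, inner_smul_left, inner_smul_right, h i k hk.symm]
    simp

/-- Interior points of the essential numerical range are attained orthogonally to any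
finite-dimensional subspace. -/
lemma exact_int [CompleteSpace H] {n : ℕ} {T : Fin n → H →L[ℂ] H} {μ : Fin n → ℂ}
    (hμ : μ ∈ interior (jointEssNumRange T)) (V : Submodule ℂ H) [FiniteDimensional ℂ V] :
    ∃ z ∈ Vᗮ, ‖z‖ = 1 ∧ ∀ j, ⟪T j z, z⟫ = μ j := by
  obtain ⟨p, ε, hp, hε, hq⟩ := robust_hull hμ
  obtain ⟨z, hz, hzV, hzT, hze⟩ := seq_select V p hp ε hε
  have h := hq (fun i j => ⟪T j (z i), z i⟫) hze
  rw [convexHull_range_eq_exists_affineCombination] at h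
  obtain ⟨s, w, hw0, hw1, hw⟩ := h
  rw [Finset.affineCombination_eq_linear_combination _ _ _ hw1] at hw
  refine ⟨∑ i ∈ s, ((√(w i) : ℝ) : ℂ) • z i,
    Submodule.sum_mem _ (fun i _ => Submodule.smul_mem _ _ (hzV i)), ?_, ?_⟩
  · have h1 := inner_comb (ContinuousLinearMap.id ℂ H) s (fun i => √(w i))
      (fun i k hik => hz.2 hik)
    simp only [ContinuousLinearMap.id_apply, inner_self_eq_norm_sq_to_K, hz.1] at h1
    have h2 : ∑ i ∈ s, ((√(w i) ^ 2 : ℝ) : ℂ) * ((1 : ℝ) : ℂ) ^ 2 = 1 := by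
      have h5 : ((∑ i ∈ s, w i : ℝ) : ℂ) = 1 := by rw [hw1, Complex.ofReal_one]
      rw [← h5, Complex.ofReal_sum]
      refine Finset.sum_congr rfl (fun i hi => ?_)
      rw [Real.sq_sqrt (hw0 i hi), Complex.ofReal_one]
      ring
    have h3 := h1.trans h2
    have h4 : ‖∑ i ∈ s, ((√(w i) : ℝ) : ℂ) • z i‖ ^ 2 = 1 := by
      apply Complex.ofReal_injective
      rw [Complex.ofReal_pow, Complex.ofReal_one]
      exact h3
    exact (pow_eq_one_iff_of_nonneg (norm_nonneg _) two_ne_zero).1 h4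
  · intro j
    rw [inner_comb (T j) s (fun i => √(w i)) (hzT j), ← hw, Finset.sum_apply]
    refine Finset.sum_congr rfl (fun i hi => ?_)
    rw [Real.sq_sqrt (hw0 i hi)]
    simp

/-- The essential numerical range is convex. -/
lemma convex_ess [CompleteSpace H] {n : ℕ} (T : Fin n → H →L[ℂ] H) :
    Convex ℝ (jointEssNumRange T) := by
  intro a ha b hb s t hs ht hst
  obtain ⟨z, hz, -, hzT, hze⟩ := seq_select (T := T) ⊥ (fun i => if Even i then a else b)
    (fun i => by split_ifs <;> assumption) (fun i => 1 / ((i : ℝ) + 1))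
    (fun i => by positivity)
  let x : ℕ → H := fun i => ((√s : ℝ) : ℂ) • z (2 * i) + ((√t : ℝ) : ℂ) • z (2 * i + 1)
  have hzz : ∀ i k, ⟪z i, z k⟫ = if i = k then 1 else 0 := orthonormal_iff_ite.1 hz
  have hs2 : ((√s : ℝ) : ℂ) * ((√s : ℝ) : ℂ) = s := by
    rw [← Complex.ofReal_mul, Real.mul_self_sqrt hs]
  have ht2 : ((√t : ℝ) : ℂ) * ((√t : ℝ) : ℂ) = t := by
    rw [← Complex.ofReal_mul, Real.mul_self_sqrt ht]
  have hst' : (s : ℂ) + t = 1 := by exact_mod_cast hst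
  refine ⟨x, ?_, ?_⟩
  · rw [orthonormal_iff_ite]
    intro i k
    simp only [x, inner_add_left, inner_add_right, inner_smul_left, inner_smul_right, hzz,
      Complex.conj_ofReal]
    have e1 : (2 * i = 2 * k) ↔ i = k := by omega
    have e2 : ¬ (2 * i = 2 * k + 1) := by omega
    have e3 : ¬ (2 * i + 1 = 2 * k) := by omega
    have e4 : (2 * i + 1 = 2 * k + 1) ↔ i = k := by omega
    simp only [e1, e2, e3, e4, if_false]
    split_ifs
    · linear_combination hs2 + ht2 + hst'
    · ring
  · intro j
    have key : ∀ i, ⟪T j (x i), x i⟫ =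
        s * ⟪T j (z (2 * i)), z (2 * i)⟫ + t * ⟪T j (z (2 * i + 1)), z (2 * i + 1)⟫ := by
      intro i
      simp only [x, map_add, map_smul, inner_add_left, inner_add_right, inner_smul_left,
        inner_smul_right, Complex.conj_ofReal, hzT j (2 * i) (2 * i + 1) (by omega),
        hzT j (2 * i + 1) (2 * i) (by omega)]
      rw [← hs2, ← ht2]
      ring
    have hlim : Tendsto (fun i => ⟪T j (z i), z i⟫ - (if Even i then a else b) j) atTop
        (nhds 0) :=
      squeeze_zero_norm (fun i => (hze i j).le) tendsto_one_div_add_atTop_nhds_zero_nat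
    have l1 : Tendsto (fun i => ⟪T j (z (2 * i)), z (2 * i)⟫) atTop (nhds (a j)) := by
      have h := hlim.comp (StrictMono.tendsto_atTop (φ := fun i : ℕ => 2 * i)
        (fun _ _ h => by simpa using h))
      have h2 := h.add_const (a j)
      simpa [Function.comp_def] using h2
    have l2 : Tendsto (fun i => ⟪T j (z (2 * i + 1)), z (2 * i + 1)⟫) atTop (nhds (b j)) := by
      have h := hlim.comp (StrictMono.tendsto_atTop (φ := fun i : ℕ => 2 * i + 1)
        (fun _ _ h => by simpa using h))
      have h2 := h.add_const (b j)
      have e : ∀ x : ℕ, ¬ Even (2 * x + 1) := fun x => by simp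
      simpa [e, Function.comp_def] using h2
    have l3 := (l1.const_mul (s : ℂ)).add (l2.const_mul (t : ℂ))
    simp only [key]
    simpa using l3

/-- One step of the basis construction. -/
lemma basis_step [CompleteSpace H] {n : ℕ} {T : Fin n → H →L[ℂ] H} {lam : Fin n → ℂ}
    (hl : lam ∈ interior (jointEssNumRange T)) :
    ∃ c : ℝ, 0 < c ∧ ∀ (V : Submodule ℂ H) [FiniteDimensional ℂ V] (e : H),
      ∃ u ∈ Vᗮ, ‖u‖ = 1 ∧ (∀ j, ⟪T j u, u⟫ = lam j) ∧
        c * ‖e - V.starProjection e‖ ≤ ‖⟪u, e⟫‖ := by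
  obtain ⟨r, hr, hball⟩ := Metric.isOpen_iff.1 isOpen_interior lam hl
  set M : ℝ := ‖lam‖ + ∑ j, ‖T j‖ + 1 with hM
  have hMpos : 0 < M := by positivity
  set s : ℝ := r / (2 * M) with hs
  have hspos : 0 < s := by positivity
  have hsM : s * M < r := by
    rw [hs]
    have : r / (2 * M) * M = r / 2 := by field_simp
    linarith
  set a : ℝ := √(s / (1 + s)) with ha
  set b : ℝ := √(1 / (1 + s)) with hb
  have hapos : 0 < a := Real.sqrt_pos.2 (by positivity)
  have ha2 : (a : ℂ) * a = s / (1 + s) := by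
    rw [← Complex.ofReal_mul, ha, Real.mul_self_sqrt (by positivity)]
    push_cast
    rfl
  have hb2 : (b : ℂ) * b = 1 / (1 + s) := by
    rw [← Complex.ofReal_mul, hb, Real.mul_self_sqrt (by positivity)]
    push_cast
    rfl
  have hs1 : (1 + s : ℂ) ≠ 0 := by
    have : (1 + s : ℝ) ≠ 0 := by positivity
    exact_mod_cast this
  refine ⟨a, hapos, ?_⟩
  intro V _ e
  set y₀ := e - V.starProjection e with hy₀
  have hy₀V : y₀ ∈ Vᗮ := V.sub_starProjection_mem_orthogonal e
  by_cases h0 : y₀ = 0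
  · obtain ⟨u, h1, h2, h3⟩ := exact_int hl V
    exact ⟨u, h1, h2, h3, by rw [h0]; simp⟩
  have hn0 : ‖y₀‖ ≠ 0 := norm_ne_zero_iff.2 h0
  set y : H := ((‖y₀‖ : ℂ)⁻¹) • y₀ with hy
  have hyn : ‖y‖ = 1 := by
    rw [hy, norm_smul]
    simp [hn0]
  have hyV : y ∈ Vᗮ := Submodule.smul_mem _ _ hy₀V
  let E : Submodule ℂ H := Submodule.span ℂ
    (insert y (Set.range (fun j => T j y) ∪ Set.range
      (fun j => ContinuousLinearMap.adjoint (T j) y)))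
  have hE : FiniteDimensional ℂ E := FiniteDimensional.span_of_finite ℂ
      (((Set.finite_range _).union (Set.finite_range _)).insert y)
  let μ : Fin n → ℂ := fun j => lam j + s * (lam j - ⟪T j y, y⟫)
  have hμ : μ ∈ interior (jointEssNumRange T) := by
    apply hball
    rw [mem_ball, dist_eq_norm, pi_norm_lt_iff hr]
    intro j
    have h1 : (μ - lam) j = s * (lam j - ⟪T j y, y⟫) := by simp [μ]
    rw [h1, norm_mul, Complex.norm_real, Real.norm_of_nonneg hspos.le]
    refine lt_of_le_of_lt ?_ hsM
    gcongr
    have h2 : ‖⟪T j y, y⟫‖ ≤ ‖T j‖ := by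
      refine (norm_inner_le_norm _ _).trans ?_
      simpa [hyn] using (T j).le_opNorm y
    have h3 : ‖T j‖ ≤ ∑ j, ‖T j‖ :=
      Finset.single_le_sum (f := fun j => ‖T j‖) (fun _ _ => norm_nonneg _) (Finset.mem_univ j)
    have h4 := norm_le_pi_norm lam j
    have h5 := norm_sub_le (lam j) ⟪T j y, y⟫
    linarith
  obtain ⟨z, hzV, hzn, hzT⟩ := exact_int hμ (V ⊔ E)
  have hzV' : z ∈ Vᗮ := Submodule.orthogonal_le le_sup_left hzV
  have hzE : ∀ w ∈ E, ⟪w, z⟫ = 0 :=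
    (Submodule.mem_orthogonal _ _).1 (Submodule.orthogonal_le le_sup_right hzV)
  have m1 : ⟪y, z⟫ = 0 := hzE _ (Submodule.subset_span (by simp))
  have m1' : ⟪z, y⟫ = 0 := inner_eq_zero_symm.1 m1
  have m2 : ∀ j, ⟪T j y, z⟫ = 0 := fun j => hzE _ (Submodule.subset_span (by simp))
  have m3 : ∀ j, ⟪T j z, y⟫ = 0 := fun j => by
    have := inner_eq_zero_symm.1
      (hzE (ContinuousLinearMap.adjoint (T j) y) (Submodule.subset_span (by simp)))
    rwa [ContinuousLinearMap.adjoint_inner_right] at this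
  have hyy : ⟪y, y⟫ = 1 := by rw [inner_self_eq_norm_sq_to_K, hyn]; simp
  have hzz : ⟪z, z⟫ = 1 := by rw [inner_self_eq_norm_sq_to_K, hzn]; simp
  have huV : (a : ℂ) • y + (b : ℂ) • z ∈ Vᗮ :=
    Submodule.add_mem _ (Submodule.smul_mem _ _ hyV) (Submodule.smul_mem _ _ hzV')
  have hyy0 : ⟪y, y₀⟫ = ‖y₀‖ := by
    have hn0' : (‖y₀‖ : ℂ) ≠ 0 := by exact_mod_cast hn0
    rw [hy, inner_smul_left, inner_self_eq_norm_sq_to_K, map_inv₀, Complex.conj_ofReal]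
    change (‖y₀‖ : ℂ)⁻¹ * (‖y₀‖ : ℂ) ^ 2 = _
    field_simp
  have hzy0 : ⟪z, y₀⟫ = 0 := by
    have hn0' : (‖y₀‖ : ℂ)⁻¹ ≠ 0 := inv_ne_zero (by exact_mod_cast hn0)
    have := m1'
    rw [hy, inner_smul_right] at this
    exact (mul_eq_zero.1 this).resolve_left hn0'
  clear_value y
  refine ⟨(a : ℂ) • y + (b : ℂ) • z, huV, ?_, ?_, ?_⟩
  · have h1 : ⟪(a : ℂ) • y + (b : ℂ) • z, (a : ℂ) • y + (b : ℂ) • z⟫ = 1 := by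
      simp only [inner_add_left, inner_add_right, inner_smul_left, inner_smul_right, hyy, hzz,
        m1, m1', Complex.conj_ofReal]
      have : (s / (1 + s) + 1 / (1 + s) : ℂ) = 1 := by field_simp; ring
      linear_combination ha2 + hb2 + this
    rw [inner_self_eq_norm_sq_to_K] at h1
    have h4 : ‖(a : ℂ) • y + (b : ℂ) • z‖ ^ 2 = 1 := by
      apply Complex.ofReal_injective
      rw [Complex.ofReal_pow, Complex.ofReal_one]
      exact h1
    exact (pow_eq_one_iff_of_nonneg (norm_nonneg _) two_ne_zero).1 h4
  · intro j
    simp only [map_add, map_smul, inner_add_left, inner_add_right, inner_smul_left,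
      inner_smul_right, hzT j, m2 j, m3 j, Complex.conj_ofReal]
    have : (s / (1 + s) * ⟪T j y, y⟫ + 1 / (1 + s) * μ j : ℂ) = lam j := by
      simp only [μ]
      field_simp
      ring
    linear_combination ha2 * ⟪T j y, y⟫ + hb2 * μ j + this
  · have h1 : ⟪(a : ℂ) • y + (b : ℂ) • z, e⟫ = ⟪(a : ℂ) • y + (b : ℂ) • z, y₀⟫ := by
      rw [hy₀, inner_sub_right, (Submodule.mem_orthogonal' _ _).1 huV _
        (V.starProjection_apply_mem e), sub_zero]
    rw [h1, inner_add_left, inner_smul_left, inner_smul_left, hyy0, hzy0, Complex.conj_ofReal,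
      mul_zero, add_zero, norm_mul, Complex.norm_real, Complex.norm_real, norm_norm,
      Real.norm_of_nonneg hapos.le]

/-- Interior points of the essential numerical range are constant diagonals. -/
lemma int_sub_constDiag [CompleteSpace H] [TopologicalSpace.SeparableSpace H] {n : ℕ}
    {T : Fin n → H →L[ℂ] H} {lam : Fin n → ℂ}
    (hl : lam ∈ interior (jointEssNumRange T)) : lam ∈ constDiag T := by
  obtain ⟨c, hc, hstep⟩ := basis_step hl
  let e : ℕ → H := TopologicalSpace.denseSeq H
  obtain ⟨V, u, hmono, -, hfd, hP, hEV, hVW⟩ := rec_select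
    (fun m V u => u ∈ Vᗮ ∧ ‖u‖ = 1 ∧ (∀ j, ⟪T j u, u⟫ = lam j) ∧
        ∀ w ∈ Vᗮ, c * ‖⟪w, e m.unpair.1⟫‖ ≤ ‖w‖ * ‖⟪u, e m.unpair.1⟫‖)
    (fun z => Submodule.span ℂ {z}) (fun z => inferInstance) ⊥
    (fun m V _ => by
      obtain ⟨u, h1, h2, h3, h4⟩ := hstep V (e m.unpair.1)
      refine ⟨u, h1, h2, h3, fun w hw => ?_⟩
      have h5 : ⟪w, e m.unpair.1⟫ =
          ⟪w, e m.unpair.1 - V.starProjection (e m.unpair.1)⟫ := by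
        rw [inner_sub_right, (Submodule.mem_orthogonal' _ _).1 hw _
          (V.starProjection_apply_mem _), sub_zero]
      rw [h5]
      have h6 := norm_inner_le_norm (𝕜 := ℂ) w (e m.unpair.1 - V.starProjection (e m.unpair.1))
      have h7 := mul_le_mul_of_nonneg_left h4 (norm_nonneg w)
      have h8 := mul_le_mul_of_nonneg_left h6 hc.le
      linarith)
  have hu : Orthonormal ℂ u := by
    have hlt : ∀ i k, i < k → ⟪u i, u k⟫ = 0 := fun i k hik =>
      (Submodule.mem_orthogonal _ _).1 (hP k).1 _
        (hEV i k hik (Submodule.mem_span_singleton_self _))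
    refine ⟨fun i => (hP i).2.1, fun i k hik => ?_⟩
    rcases lt_or_gt_of_ne hik with h | h
    · exact hlt i k h
    · exact inner_eq_zero_symm.1 (hlt k i h)
  have hVspan : ∀ m, V m ≤ Submodule.span ℂ (Set.range u) :=
    hVW _ bot_le (fun m => Submodule.span_mono (by rintro _ rfl; exact ⟨m, rfl⟩))
  have hbot : (Submodule.span ℂ (Set.range u))ᗮ = ⊥ := by
    rw [Submodule.eq_bot_iff]
    intro w hw
    have hwe : ∀ k, ⟪w, e k⟫ = 0 := by
      intro k
      have hlim : Tendsto (fun m => ‖w‖ * ‖⟪u (Nat.pair k m), e k⟫‖) atTop (nhds 0) := by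
        have h1 := (ortho_inner_tendsto hu (e k)).comp
          (tendsto_atTop_mono (Nat.right_le_pair k) tendsto_id)
        simpa using (h1.norm).const_mul ‖w‖
      have hle : c * ‖⟪w, e k⟫‖ ≤ 0 := by
        refine ge_of_tendsto' hlim (fun m => ?_)
        have := (hP (Nat.pair k m)).2.2.2 w (Submodule.orthogonal_le (hVspan _) hw)
        simpa using this
      have : ‖⟪w, e k⟫‖ ≤ 0 := by
        by_contra hcon
        push Not at hcon
        have := mul_pos hc hcon
        linarith
      exact norm_le_zero_iff.1 this
    have hd : DenseRange e := TopologicalSpace.denseRange_denseSeq H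
    have hall : (fun v : H => ⟪w, v⟫) = fun _ => 0 :=
      hd.equalizer (by fun_prop) (by fun_prop) (funext hwe)
    exact inner_self_eq_zero.1 (congrFun hall w)
  refine ⟨HilbertBasis.mkOfOrthogonalEqBot hu hbot, fun k j => ?_⟩
  rw [HilbertBasis.coe_mkOfOrthogonalEqBot]
  exact (hP k).2.2.1 j

/-- The essential numerical range is stable under compact perturbations. -/
lemma ess_add_compact [CompleteSpace H] {n : ℕ} (T K : Fin n → H →L[ℂ] H)
    (hK : ∀ j, IsCompactOperator (K j)) :
    jointEssNumRange T ⊆ jointEssNumRange (fun j => T j + K j) := by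
  rintro lam ⟨x, hx, hT⟩
  refine ⟨x, hx, fun j => ?_⟩
  have h1 : Tendsto (fun k => ⟪K j (x k), x k⟫) atTop (nhds 0) := by
    have h0 := (compact_ortho_tendsto hx (hK j)).norm
    rw [norm_zero] at h0
    refine squeeze_zero_norm (fun k => ?_) h0
    simpa [hx.1 k] using norm_inner_le_norm (𝕜 := ℂ) (K j (x k)) (x k)
  have h2 := (hT j).add h1
  simpa [inner_add_left] using h2

/-- Subsequential limits. -/
lemma ess_subseq {n : ℕ} (T : Fin n → H →L[ℂ] H) {x : ℕ → H} (hx : Orthonormal ℂ x) :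
    ∃ μ ∈ jointEssNumRange T, ∃ φ : ℕ → ℕ, StrictMono φ ∧
      Tendsto (fun k => (fun j => ⟪T j (x (φ k)), x (φ k)⟫ : Fin n → ℂ)) atTop (nhds μ) := by
  have hmem : ∀ k, (fun j => ⟪T j (x k), x k⟫ : Fin n → ℂ) ∈
      closedBall (0 : Fin n → ℂ) (∑ j, ‖T j‖) := by
    intro k
    rw [mem_closedBall_zero_iff, pi_norm_le_iff_of_nonneg (by positivity)]
    intro j
    have h2 : ‖⟪T j (x k), x k⟫‖ ≤ ‖T j‖ := by
      refine (norm_inner_le_norm _ _).trans ?_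
      simpa [hx.1 k] using (T j).le_opNorm (x k)
    exact h2.trans (Finset.single_le_sum (f := fun j => ‖T j‖) (fun _ _ => norm_nonneg _)
      (Finset.mem_univ j))
  obtain ⟨μ, -, φ, hφ, hlim⟩ := (isCompact_closedBall _ _).tendsto_subseq hmem
  refine ⟨μ, ⟨x ∘ φ, hx.comp φ hφ.injective, fun j => ?_⟩, φ, hφ, hlim⟩
  exact (tendsto_pi_nhds.1 hlim) j

/-- Infinite-dimensional subspaces contain orthonormal sequences. -/
lemma exists_ortho_seq (W : Submodule ℂ H) (hW : ¬ FiniteDimensional ℂ W) :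
    ∃ x : ℕ → H, Orthonormal ℂ x ∧ ∀ k, x k ∈ W := by
  obtain ⟨V, u, -, -, -, hP, hEV, -⟩ := rec_select
    (fun _ V u => u ∈ W ∧ u ∈ Vᗮ ∧ ‖u‖ = 1)
    (fun z => Submodule.span ℂ {z}) (fun z => inferInstance) ⊥
    (fun m V _ => by
      have hex : ∃ w ∈ W, w ∈ Vᗮ ∧ w ≠ 0 := by
        by_contra hcon
        push Not at hcon
        apply hW
        let f : W →ₗ[ℂ] V := V.orthogonalProjectionOnto.toLinearMap ∘ₗ W.subtype
        refine FiniteDimensional.of_injective f ?_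
        rw [← LinearMap.ker_eq_bot, Submodule.eq_bot_iff]
        intro w hw
        have h1 : V.orthogonalProjectionOnto (w : H) = 0 := hw
        have h2 : (w : H) ∈ Vᗮ := Submodule.orthogonalProjectionOnto_eq_zero_iff.1 h1
        exact Subtype.ext (hcon w w.2 h2)
      obtain ⟨w, h1, h2, h3⟩ := hex
      refine ⟨((‖w‖ : ℂ)⁻¹) • w, Submodule.smul_mem _ _ h1, Submodule.smul_mem _ _ h2, ?_⟩
      rw [norm_smul]
      simp [h3])
  have hlt : ∀ i k, i < k → ⟪u i, u k⟫ = 0 := fun i k hik =>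
      (Submodule.mem_orthogonal _ _).1 (hP k).2.1 _
        (hEV i k hik (Submodule.mem_span_singleton_self _))
  refine ⟨u, ⟨fun i => (hP i).2.2, fun i k hik => ?_⟩, fun k => (hP k).1⟩
  rcases lt_or_gt_of_ne hik with h | h
  · exact hlt i k h
  · exact inner_eq_zero_symm.1 (hlt k i h)

/-- Supporting functionals in finite dimension. -/
lemma exists_support {E : Type*} [NormedAddCommGroup E] [NormedSpace ℝ E]
    [FiniteDimensional ℝ E] {C : Set E} (hC : Convex ℝ C) (hne : C.Nonempty) {a : E}
    (ha : a ∉ interior C) : ∃ f : E →L[ℝ] ℝ, f ≠ 0 ∧ ∀ x ∈ C, f x ≤ f a := by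
  by_cases hi : (interior C).Nonempty
  · obtain ⟨f, hf⟩ := geometric_hahn_banach_open_point hC.interior isOpen_interior ha
    refine ⟨f, ?_, ?_⟩
    · rintro rfl
      obtain ⟨y, hy⟩ := hi
      simpa using hf y hy
    · intro x hx
      have h1 : x ∈ closure (interior C) := by
        rw [hC.closure_interior_eq_closure_of_nonempty_interior hi]
        exact subset_closure hx
      have h2 : closure (interior C) ⊆ {y | f y ≤ f a} :=
        closure_minimal (fun y hy => (hf y hy).le) (isClosed_le f.continuous continuous_const)
      exact h2 h1
  · rw [hC.interior_nonempty_iff_affineSpan_eq_top] at hi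
    obtain ⟨y, hy⟩ := hne
    have hdir : (affineSpan ℝ C).direction < ⊤ := by
      rw [lt_top_iff_ne_top]
      intro h
      exact hi ((AffineSubspace.direction_eq_top_iff_of_nonempty
        ⟨y, subset_affineSpan ℝ C hy⟩).1 h)
    obtain ⟨f, hf0, hf⟩ := Submodule.exists_le_ker_of_lt_top _ hdir
    have hconst : ∀ x ∈ C, f x = f y := by
      intro x hx
      have h1 : x -ᵥ y ∈ (affineSpan ℝ C).direction :=
        AffineSubspace.vsub_mem_direction (subset_affineSpan ℝ C hx) (subset_affineSpan ℝ C hy)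
      have h2 : f (x - y) = 0 := hf h1
      rw [map_sub] at h2
      linarith
    have hfc : LinearMap.toContinuousLinearMap f ≠ 0 := by
      intro h
      apply hf0
      ext v
      exact congrArg (fun g : E →L[ℝ] ℝ => g v) h
    rcases le_total (f y) (f a) with h | h
    · exact ⟨LinearMap.toContinuousLinearMap f, hfc, fun x hx => by
        simpa [hconst x hx] using h⟩
    · exact ⟨-LinearMap.toContinuousLinearMap f, neg_ne_zero.2 hfc, fun x hx => by
        simpa [hconst x hx] using h⟩

/-- Real functionals on `ℂ^n`. -/
lemma functional_repr {n : ℕ} (f : (Fin n → ℂ) →L[ℝ] ℝ) :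
    ∃ c : Fin n → ℂ, ∀ v, f v = (∑ j, c j * v j).re := by
  refine ⟨fun j => ⟨f (Pi.single j 1), -f (Pi.single j Complex.I)⟩, fun v => ?_⟩
  have hv : v = ∑ j, ((v j).re • (Pi.single j 1 : Fin n → ℂ) +
      (v j).im • (Pi.single j Complex.I : Fin n → ℂ)) := by
    ext k
    rw [Finset.sum_apply, Finset.sum_eq_single k]
    · simp
    · intro b _ hb
      simp [Pi.single_apply, hb.symm]
    · simp
  conv_lhs => rw [hv]
  rw [map_sum, Complex.re_sum]
  refine Finset.sum_congr rfl (fun j _ => ?_)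
  simp [map_add, map_smul]
  ring

/-- A strictly positive compact operator. -/
lemma exists_pos_compact [CompleteSpace H] [TopologicalSpace.SeparableSpace H] :
    ∃ K : H →L[ℂ] H, IsCompactOperator K ∧ ∀ x : H, x ≠ 0 → 0 < (⟪K x, x⟫).re := by
  let d : ℕ → H := TopologicalSpace.denseSeq H
  let a : ℕ → ℝ := fun i => (1 / 2) ^ i / (1 + ‖d i‖ ^ 2)
  have ha : ∀ i, 0 < a i := fun i => by positivity
  let R : ℕ → H →L[ℂ] H := fun i => (a i : ℂ) • InnerProductSpace.rankOne ℂ (d i) (d i)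
  have hRn : ∀ i, ‖R i‖ ≤ (1 / 2) ^ i := by
    intro i
    simp only [R, norm_smul, InnerProductSpace.norm_rankOne, Complex.norm_real,
      Real.norm_of_nonneg (ha i).le, a]
    rw [div_mul_eq_mul_div, div_le_iff₀ (by positivity)]
    gcongr
    nlinarith
  have hsum : Summable R :=
    Summable.of_norm_bounded (summable_geometric_of_lt_one (by norm_num) (by norm_num)) hRn
  have hRe : ∀ i x, R i x = ((a i : ℂ) * ⟪d i, x⟫) • d i := by
    intro i x
    change (a i : ℂ) • (⟪d i, x⟫ • d i) = _
    rw [smul_smul]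
  clear_value R
  have hRx : ∀ i x, (⟪R i x, x⟫).re = a i * ‖⟪d i, x⟫‖ ^ 2 := by
    intro i x
    rw [hRe, inner_smul_left, map_mul, Complex.conj_ofReal, mul_assoc,
      ← Complex.normSq_eq_conj_mul_self, ← Complex.ofReal_mul, Complex.ofReal_re,
      Complex.normSq_eq_norm_sq]
  have hRc : ∀ i, IsCompactOperator (R i) := fun i =>
    compact_of_fin_range (Submodule.span ℂ {d i}) (fun x => by
      rw [hRe]
      exact Submodule.smul_mem _ _ (Submodule.mem_span_singleton_self _))
  obtain ⟨K, hK⟩ := hsum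
  refine ⟨K, ?_, ?_⟩
  · have hs : ∀ s : Finset ℕ, IsCompactOperator (∑ i ∈ s, R i : H →L[ℂ] H) := by
      intro s
      exact (compactOperator (RingHom.id ℂ) H H).sum_mem (fun i _ => hRc i)
    exact isCompactOperator_of_tendsto hK (Eventually.of_forall hs)
  · intro x hx
    have h1 : HasSum (fun i => (⟪R i x, x⟫).re) (⟪K x, x⟫).re := by
      have h2 : HasSum (fun i => R i x) (K x) :=
        ((ContinuousLinearMap.apply ℂ H x : (H →L[ℂ] H) →L[ℂ] H)).hasSum hK
      have h3 : HasSum (fun i => ⟪x, R i x⟫) ⟪x, K x⟫ := (innerSL ℂ x).hasSum h2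
      have h4 := Complex.hasSum_re h3
      have h5 : ∀ v : H, (⟪v, x⟫).re = (⟪x, v⟫).re := fun v => by
        rw [← inner_conj_symm, Complex.conj_re]
      simpa only [h5] using h4
    simp only [hRx] at h1
    have hex : ∃ i, ⟪d i, x⟫ ≠ 0 := by
      by_contra hcon
      push Not at hcon
      have hd : DenseRange d := TopologicalSpace.denseRange_denseSeq H
      have hall : (fun v : H => ⟪v, x⟫) = fun _ => 0 :=
        hd.equalizer (by fun_prop) (by fun_prop) (funext hcon)
      exact hx (inner_self_eq_zero.1 (congrFun hall x))
    obtain ⟨i, hi⟩ := hex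
    rw [← h1.tsum_eq]
    refine h1.summable.tsum_pos (fun k => ?_) i ?_
    · have := ha k
      positivity
    · have := ha i
      have := norm_pos_iff.2 hi
      positivity

/-- If a self-adjoint operator has non-positive essential numerical range, then it is dominated
by a compact operator. -/
lemma exists_compact_dom [CompleteSpace H] {S : H →L[ℂ] H} (hS : IsSelfAdjoint S)
    (h : ∀ x : ℕ → H, Orthonormal ℂ x → ∀ ε > 0, ¬ ∀ k, ε ≤ (⟪S (x k), x k⟫).re) :
    ∃ C : H →L[ℂ] H, IsCompactOperator C ∧ ∀ x, (⟪S x, x⟫).re ≤ (⟪C x, x⟫).re := by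
  let B : ℝ → H →L[ℂ] H := fun ε => cfc (fun t : ℝ => max (t - ε) 0) S
  have hBpos : ∀ ε x, 0 ≤ (⟪B ε x, x⟫).re := by
    intro ε x
    have h1 : (0 : H →L[ℂ] H) ≤ B ε := cfc_nonneg (fun t _ => le_max_right _ _)
    have h2 := (ContinuousLinearMap.nonneg_iff_isPositive _).1 h1
    exact h2.re_inner_nonneg_left x
  have hBfin : ∀ ε > 0, IsCompactOperator (B ε) := by
    intro ε hε
    have hfd : FiniteDimensional ℂ (LinearMap.range (B ε).toLinearMap) := by
      by_contra hW
      obtain ⟨x, hx, hxW⟩ := exists_ortho_seq _ hW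
      refine h x hx ε hε (fun k => ?_)
      obtain ⟨y, hy⟩ := hxW k
      have hy' : B ε y = x k := hy
      have hmul : S * B ε = B ε * B ε + (ε : ℂ) • B ε := by
        have e1 : S * B ε = cfc (fun t : ℝ => t * max (t - ε) 0) S := by
          rw [cfc_mul (fun t : ℝ => t) (fun t : ℝ => max (t - ε) 0) S, cfc_id' ℝ S]
        have e2 : B ε * B ε = cfc (fun t : ℝ => max (t - ε) 0 * max (t - ε) 0) S := by
          rw [cfc_mul (fun t : ℝ => max (t - ε) 0) (fun t : ℝ => max (t - ε) 0) S]
        have e3 : (ε : ℂ) • B ε = cfc (fun t : ℝ => ε * max (t - ε) 0) S := by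
          rw [cfc_const_mul ε (fun t : ℝ => max (t - ε) 0) S]
          exact Complex.coe_smul ε _
        rw [e1, e2, e3, ← cfc_add (a := S) (fun t : ℝ => max (t - ε) 0 * max (t - ε) 0)
          (fun t : ℝ => ε * max (t - ε) 0)]
        congr 1
        ext t
        rcases le_total (t - ε) 0 with h | h
        · simp [max_eq_right h]
        · rw [max_eq_left h]
          ring
      have h1 : S (x k) = B ε (x k) + (ε : ℂ) • x k := by
        have := congrArg (fun A : H →L[ℂ] H => A y) hmul
        simpa [hy'] using this
      rw [h1, inner_add_left, inner_smul_left, inner_self_eq_norm_sq_to_K, hx.1 k,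
        Complex.conj_ofReal]
      have := hBpos ε (x k)
      simpa using this
    exact compact_of_fin_range _ (fun x => LinearMap.mem_range_self (B ε).toLinearMap x)
  refine ⟨B 0, ?_, ?_⟩
  · have hlim : Tendsto (fun i : ℕ => B (1 / ((i : ℝ) + 1))) atTop (nhds (B 0)) := by
      rw [tendsto_iff_norm_sub_tendsto_zero]
      refine squeeze_zero (fun _ => norm_nonneg _) (fun i => ?_)
        tendsto_one_div_add_atTop_nhds_zero_nat
      have hi : 0 ≤ 1 / ((i : ℝ) + 1) := by positivity
      simp only [B]
      rw [← cfc_sub (a := S) (fun t : ℝ => max (t - 1 / ((i : ℝ) + 1)) 0)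
        (fun t : ℝ => max (t - 0) 0)]
      refine norm_cfc_le hi (fun t _ => ?_)
      rw [Real.norm_eq_abs]
      refine (abs_max_sub_max_le_abs _ _ _).trans ?_
      rw [abs_le]
      constructor <;> linarith
    exact isCompactOperator_of_tendsto hlim
      (Eventually.of_forall (fun i => hBfin _ (by positivity)))
  · intro x
    have h1 : S ≤ B 0 := by
      conv_lhs => rw [← cfc_id' ℝ S]
      exact cfc_mono (fun t _ => by simp)
    have h2 := (ContinuousLinearMap.le_def _ _).1 h1
    have h3 := h2.re_inner_nonneg_left x
    simp only [ContinuousLinearMap.sub_apply, inner_sub_left, map_sub] at h3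
    have h4 : 0 ≤ (⟪B 0 x, x⟫).re - (⟪S x, x⟫).re := h3
    linarith

/-- Points outside the interior of `W_e` are avoided by a compact perturbation. -/
lemma exists_avoid [CompleteSpace H] [TopologicalSpace.SeparableSpace H]
    (hdim : ¬ FiniteDimensional ℂ H) {n : ℕ} (T : Fin n → H →L[ℂ] H) {lam : Fin n → ℂ}
    (hl : lam ∉ interior (jointEssNumRange T)) :
    ∃ K : Fin n → H →L[ℂ] H, (∀ j, IsCompactOperator (K j)) ∧
      lam ∉ jointNumRange (fun j => T j + K j) := by
  classical
  have hne : (jointEssNumRange T).Nonempty := by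
    obtain ⟨x, hx, -⟩ := exists_ortho_seq (⊤ : Submodule ℂ H) (fun hfin => hdim
      (Module.Finite.equiv (Submodule.topEquiv (R := ℂ) (M := H))))
    obtain ⟨μ, hμ, -⟩ := ess_subseq T hx
    exact ⟨μ, hμ⟩
  obtain ⟨f, hf0, hf⟩ := exists_support (convex_ess T) hne hl
  obtain ⟨c, hc⟩ := functional_repr f
  have hj : ∃ j, c j ≠ 0 := by
    by_contra hcon
    push Not at hcon
    apply hf0
    ext v
    simp [hc, hcon]
  obtain ⟨j₀, hj₀⟩ := hj
  let A : H →L[ℂ] H := ∑ j, (starRingEnd ℂ (c j)) • T j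
  have hA : ∀ x, (⟪A x, x⟫).re = f (fun j => ⟪T j x, x⟫) := by
    intro x
    rw [hc]
    simp [A, sum_inner, inner_smul_left, mul_comm]
  let S : H →L[ℂ] H := A + ContinuousLinearMap.adjoint A - ((2 * f lam : ℝ) : ℂ) • 1
  have hSadj : IsSelfAdjoint S := by
    have h1 : IsSelfAdjoint (A + ContinuousLinearMap.adjoint A) :=
      IsSelfAdjoint.add_star_self A
    refine h1.sub (IsSelfAdjoint.smul ?_ (IsSelfAdjoint.one _))
    exact Complex.conj_ofReal _
  have hSx : ∀ x, (⟪S x, x⟫).re = 2 * (f (fun j => ⟪T j x, x⟫) - f lam * ‖x‖ ^ 2) := by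
    intro x
    have h1 : (⟪ContinuousLinearMap.adjoint A x, x⟫).re = (⟪A x, x⟫).re := by
      rw [ContinuousLinearMap.adjoint_inner_left, ← inner_conj_symm, Complex.conj_re]
    have h2 : ⟪((2 * f lam : ℝ) : ℂ) • x, x⟫ = ((2 * f lam * ‖x‖ ^ 2 : ℝ) : ℂ) := by
      rw [inner_smul_left, inner_self_eq_norm_sq_to_K, Complex.conj_ofReal]
      push_cast
      rfl
    have h3 : S x = A x + ContinuousLinearMap.adjoint A x - ((2 * f lam : ℝ) : ℂ) • x := rfl
    rw [h3, inner_sub_left, inner_add_left, Complex.sub_re, Complex.add_re, h1, h2, hA,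
      Complex.ofReal_re]
    ring
  obtain ⟨C, hCc, hC⟩ := exists_compact_dom hSadj (by
    intro x hx ε hε hcon
    obtain ⟨μ, hμ, φ, -, hlim⟩ := ess_subseq T hx
    have h1 := (f.continuous.tendsto μ).comp hlim
    have h2 : f lam + ε / 2 ≤ f μ := by
      refine ge_of_tendsto' h1 (fun k => ?_)
      have h3 := hcon (φ k)
      rw [hSx, hx.1] at h3
      simp only [Function.comp_apply]
      linarith
    have h4 := hf μ hμ
    linarith)
  obtain ⟨K', hK'c, hK'⟩ := exists_pos_compact (H := H)
  let D : H →L[ℂ] H := C + K'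
  have hDc : IsCompactOperator D := hCc.add hK'c
  let K₀ : H →L[ℂ] H := (-(2 * starRingEnd ℂ (c j₀))⁻¹) • D
  refine ⟨fun j => if j = j₀ then K₀ else 0, ?_, ?_⟩
  · intro j
    dsimp only
    split_ifs
    · exact hDc.smul (-(2 * starRingEnd ℂ (c j₀))⁻¹)
    · exact isCompactOperator_zero
  · rintro ⟨x, hx, hT⟩
    have h1 : f lam = f (fun j => ⟪T j x, x⟫) - (⟪D x, x⟫).re / 2 := by
      have e : lam = (fun j => ⟪T j x, x⟫) +
          (fun j => if j = j₀ then ⟪K₀ x, x⟫ else 0) := by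
        ext j
        rw [← hT j]
        by_cases hjj : j = j₀ <;> simp [hjj, inner_add_left]
      conv_lhs => rw [e]
      rw [map_add, hc (fun j => if j = j₀ then ⟪K₀ x, x⟫ else 0)]
      have e2 : (∑ j, c j * (if j = j₀ then ⟪K₀ x, x⟫ else 0)) = -(⟪D x, x⟫ / (2 : ℝ)) := by
        have e3 : ⟪K₀ x, x⟫ = -(2 * c j₀)⁻¹ * ⟪D x, x⟫ := by
          have : K₀ x = (-(2 * starRingEnd ℂ (c j₀))⁻¹) • D x := rfl
          rw [this, inner_smul_left]
          simp only [map_neg, map_inv₀, map_mul, Complex.conj_conj, Complex.conj_ofNat]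
        simp only [mul_ite, mul_zero, Finset.sum_ite_eq', Finset.mem_univ, if_true, e3]
        push_cast
        field_simp
      rw [e2, Complex.neg_re, Complex.div_ofReal_re]
      ring
    have h2 := hC x
    rw [hSx, hx] at h2
    have h3 := hK' x (by rintro rfl; simp at hx)
    have h4 : (⟪D x, x⟫).re = (⟪C x, x⟫).re + (⟪K' x, x⟫).re := by
      have : D x = C x + K' x := rfl
      rw [this, inner_add_left, Complex.add_re]
    linarith

end Helpers

/-- `⋂_{𝒦 compact} W(𝒯 + 𝒦) = ⋂_{𝒦 compact} D_const(𝒯 + 𝒦) = Int W_e(𝒯)`. -/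
theorem stmt_14 {H : Type*} [NormedAddCommGroup H] [InnerProductSpace ℂ H]
    [CompleteSpace H] [TopologicalSpace.SeparableSpace H]
    (hdim : ¬ FiniteDimensional ℂ H)
    {n : ℕ} (T : Fin n → H →L[ℂ] H) :
    (⋂ K ∈ {K : Fin n → H →L[ℂ] H | ∀ j, IsCompactOperator (K j)},
        jointNumRange (fun j => T j + K j)) = interior (jointEssNumRange T) ∧
    (⋂ K ∈ {K : Fin n → H →L[ℂ] H | ∀ j, IsCompactOperator (K j)},
        constDiag (fun j => T j + K j)) = interior (jointEssNumRange T) := by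
  have h1 : interior (jointEssNumRange T) ⊆
      ⋂ K ∈ {K : Fin n → H →L[ℂ] H | ∀ j, IsCompactOperator (K j)},
        constDiag (fun j => T j + K j) := by
    intro lam hl
    refine Set.mem_iInter₂.2 (fun K hK => ?_)
    exact int_sub_constDiag (interior_mono (ess_add_compact T K hK) hl)
  have h2 : (⋂ K ∈ {K : Fin n → H →L[ℂ] H | ∀ j, IsCompactOperator (K j)},
        constDiag (fun j => T j + K j)) ⊆
      ⋂ K ∈ {K : Fin n → H →L[ℂ] H | ∀ j, IsCompactOperator (K j)},
        jointNumRange (fun j => T j + K j) := by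
    refine Set.iInter₂_mono (fun K _ => ?_)
    rintro lam ⟨u, hu⟩
    exact ⟨u 0, u.orthonormal.1 0, hu 0⟩
  have h3 : (⋂ K ∈ {K : Fin n → H →L[ℂ] H | ∀ j, IsCompactOperator (K j)},
        jointNumRange (fun j => T j + K j)) ⊆ interior (jointEssNumRange T) := by
    intro lam hl
    by_contra hcon
    obtain ⟨K, hK, hnot⟩ := exists_avoid hdim T hcon
    exact hnot (Set.mem_iInter₂.1 hl K hK)
  exact ⟨Set.Subset.antisymm h3 (h1.trans h2), Set.Subset.antisymm (h2.trans h3) h1⟩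
end

section
/- Let H be a complex separable infinite-dimensional Hilbert space and T a bounded operator on H with W_e(T) ⊇ closed unit disc. Then there exists a sequence (H_k)_{k≥1} of mutually orthogonal closed subspaces of H such that for every k the essential numerical range of the compression P_{H_k} T|_{H_k} (as an operator on H_k) contains the closed unit disc. -/
open Filter Metric
open scoped ComplexInnerProductSpace

/-- The essential numerical range of a bounded operator. -/
def essNumRange {H : Type*} [NormedAddCommGroup H] [InnerProductSpace ℂ H]
    (T : H →L[ℂ] H) : Set ℂ :=
  {lam | ∃ x : ℕ → H, Orthonormal ℂ x ∧
    Tendsto (fun k => ⟪T (x k), x k⟫) atTop (nhds lam)}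

/-- The essential numerical range of the compression `P_K T|_K` of `T` to a closed
subspace `K`: the set of `λ ∈ ℂ` for which there is an orthonormal sequence `(x_k)`
contained in `K` with `⟨T x_k, x_k⟩ → λ` (note that `⟨P_K T x, x⟩ = ⟨T x, x⟩` for
`x ∈ K`). -/
def essNumRangeCompression {H : Type*} [NormedAddCommGroup H] [InnerProductSpace ℂ H]
    (T : H →L[ℂ] H) (K : Submodule ℂ H) : Set ℂ :=
  {lam | ∃ x : ℕ → H, Orthonormal ℂ x ∧ (∀ k, x k ∈ K) ∧
    Tendsto (fun k => ⟪T (x k), x k⟫) atTop (nhds lam)}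

/-- A sequence where each term is chosen as a function of the set of the previous ones. -/
noncomputable def recSeq {H : Type*} (g : ℕ → Set H → H) : ℕ → H
  | n => g n (Set.range fun i : Fin n => recSeq g i)
termination_by n => n
decreasing_by exact i.2

theorem step_exists {H : Type*} [NormedAddCommGroup H] [InnerProductSpace ℂ H]
    (T : H →L[ℂ] H) {lam : ℂ} (h : lam ∈ essNumRange T) (S : Set H) (hS : S.Finite)
    {ε : ℝ} (hε : 0 < ε) :
    ∃ u : H, ‖u‖ = 1 ∧ (∀ s ∈ S, ⟪s, u⟫ = 0) ∧ ‖⟪T u, u⟫ - lam‖ < ε := by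
  obtain ⟨x, hx, hlim⟩ := h
  let F := Submodule.span ℂ S
  haveI : FiniteDimensional ℂ F := FiniteDimensional.span_of_finite ℂ hS
  have hweak : ∀ v : H, Tendsto (fun k => ⟪v, x k⟫) atTop (nhds 0) := by
    intro v
    have h1 := (hx.inner_products_summable (x := v)).tendsto_atTop_zero
    have h2 : Tendsto (fun k => ‖⟪x k, v⟫‖) atTop (nhds 0) := by
      have := h1.sqrt
      simpa [Real.sqrt_sq (norm_nonneg _)] using this
    rw [tendsto_zero_iff_norm_tendsto_zero]
    simpa only [norm_inner_symm] using h2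
  have hP : Tendsto (fun k => (F.starProjection (x k))) atTop (nhds 0) := by
    let b := stdOrthonormalBasis ℂ F
    have : ∀ k, F.starProjection (x k) = ∑ i, ⟪(b i : H), x k⟫ • (b i : H) := by
      intro k
      rw [Submodule.starProjection_apply, b.orthogonalProjection_apply_eq_sum]
      simp
    simp only [this]
    have := tendsto_finsetSum (f := fun i k => ⟪(b i : H), x k⟫ • (b i : H)) (x := atTop)
      (a := fun _ => 0) Finset.univ (fun i _ => by
        simpa using (hweak (b i)).smul_const (b i : H))
    simpa using this
  let y : ℕ → H := fun k => x k - F.starProjection (x k)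
  have hyn : Tendsto (fun k => ‖y k‖) atTop (nhds 1) := by
    have h1 : Tendsto (fun k => ‖y k‖ - ‖x k‖) atTop (nhds 0) := by
      refine squeeze_zero_norm (fun k => ?_) (by simpa using hP.norm)
      refine (abs_norm_sub_norm_le _ _).trans ?_
      simp [y]
    simpa [hx.1] using h1.add_const 1
  have hTy : Tendsto (fun k => ⟪T (y k), y k⟫) atTop (nhds lam) := by
    have h1 : Tendsto (fun k => ⟪T (y k), y k⟫ - ⟪T (x k), x k⟫) atTop (nhds 0) := by
      have hb : Tendsto (fun k => ‖T‖ * ‖F.starProjection (x k)‖ * 1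
          + ‖T‖ * ‖y k‖ * ‖F.starProjection (x k)‖) atTop (nhds 0) := by
        have := ((hP.norm.const_mul ‖T‖).mul_const 1).add
          ((hyn.const_mul ‖T‖).mul hP.norm)
        simpa using this
      refine squeeze_zero_norm (fun k => ?_) hb
      have e : ⟪T (y k), y k⟫ - ⟪T (x k), x k⟫
          = - ⟪T (F.starProjection (x k)), x k⟫ - ⟪T (y k), F.starProjection (x k)⟫ := by
        simp only [y, map_sub, inner_sub_left, inner_sub_right]
        ring
      rw [e]
      refine (norm_sub_le _ _).trans (add_le_add ?_ ?_)
      · rw [norm_neg]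
        refine (norm_inner_le_norm _ _).trans ?_
        rw [hx.1 k]
        gcongr
        exact T.le_opNorm _
      · refine (norm_inner_le_norm _ _).trans ?_
        gcongr
        exact T.le_opNorm _
    simpa using h1.add hlim
  have hu : Tendsto (fun k => (((‖y k‖⁻¹ : ℝ) : ℂ) ^ 2) * ⟪T (y k), y k⟫) atTop (nhds lam) := by
    have h1 : Tendsto (fun k => ((‖y k‖⁻¹ : ℝ) : ℂ)) atTop (nhds 1) := by
      have := (Complex.continuous_ofReal.tendsto _).comp (hyn.inv₀ one_ne_zero)
      simpa [Function.comp_def] using this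
    simpa using (h1.pow 2).mul hTy
  have ev1 := (Metric.tendsto_nhds.1 hu) ε hε
  have ev2 := hyn.eventually (lt_mem_nhds (zero_lt_one))
  obtain ⟨k, hk1, hk2⟩ := (ev1.and ev2).exists
  refine ⟨((‖y k‖⁻¹ : ℝ) : ℂ) • y k, ?_, ?_, ?_⟩
  · rw [norm_smul]
    simp [hk2.ne']
  · intro s hs
    have : y k ∈ Fᗮ := F.sub_starProjection_mem_orthogonal (x k)
    rw [inner_smul_right, (F.mem_orthogonal _).1 this s (Submodule.subset_span hs), mul_zero]
  · rw [dist_eq_norm] at hk1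
    have e : ⟪T (((‖y k‖⁻¹ : ℝ) : ℂ) • y k), ((‖y k‖⁻¹ : ℝ) : ℂ) • y k⟫
        = (((‖y k‖⁻¹ : ℝ) : ℂ) ^ 2) * ⟪T (y k), y k⟫ := by
      rw [map_smul, inner_smul_left, inner_smul_right, Complex.conj_ofReal]
      ring
    rw [e]
    exact hk1

/-- If `W_e(T) ⊇ 𝔻̄`, then there are mutually orthogonal closed subspaces `H_k ⊂ H`
such that the essential numerical range of each compression `P_{H_k} T|_{H_k}`
still contains the closed unit disc. -/
theorem stmt_16 {H : Type*} [NormedAddCommGroup H] [InnerProductSpace ℂ H]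
    [CompleteSpace H] [TopologicalSpace.SeparableSpace H]
    (hdim : ¬ FiniteDimensional ℂ H)
    (T : H →L[ℂ] H) (hWe : Metric.closedBall (0 : ℂ) 1 ⊆ essNumRange T) :
    ∃ Hk : ℕ → Submodule ℂ H,
      (∀ k, IsClosed (Hk k : Set H)) ∧
      (∀ k l, k ≠ l → ∀ x ∈ Hk k, ∀ y ∈ Hk l, ⟪x, y⟫ = 0) ∧
      (∀ k, Metric.closedBall (0 : ℂ) 1 ⊆ essNumRangeCompression T (Hk k)) := by
  let D := Metric.closedBall (0 : ℂ) 1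
  haveI : Nonempty D := ⟨⟨0, by simp [D]⟩⟩
  let d : ℕ → D := TopologicalSpace.denseSeq D
  let tgt : ℕ → D := fun n => d (Nat.unpair (Nat.unpair n).2).1
  have hstep : ∀ (n : ℕ) (S : Set H), ∃ u : H, S.Finite → (‖u‖ = 1 ∧ (∀ s ∈ S, ⟪s, u⟫ = 0) ∧
      ‖⟪T u, u⟫ - (tgt n : ℂ)‖ < 1 / ((n : ℝ) + 1)) := by
    intro n S
    by_cases hS : S.Finite
    · obtain ⟨u, hu⟩ := step_exists T (hWe (tgt n).2) S hS (ε := 1 / ((n : ℝ) + 1))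
        (by positivity)
      exact ⟨u, fun _ => hu⟩
    · exact ⟨0, fun h => absurd h hS⟩
  choose g hg using hstep
  let u : ℕ → H := recSeq g
  have hu : ∀ n, ‖u n‖ = 1 ∧ (∀ m, m < n → ⟪u m, u n⟫ = 0) ∧
      ‖⟪T (u n), u n⟫ - (tgt n : ℂ)‖ < 1 / ((n : ℝ) + 1) := by
    intro n
    have h := hg n (Set.range fun i : Fin n => recSeq g i) (Set.finite_range _)
    have e : u n = g n (Set.range fun i : Fin n => recSeq g i) := by
      simp only [u]
      rw [recSeq]
    rw [← e] at h
    exact ⟨h.1, fun m hm => h.2.1 _ ⟨⟨m, hm⟩, rfl⟩, h.2.2⟩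
  have hon : Orthonormal ℂ u := by
    refine ⟨fun n => (hu n).1, fun m n hmn => ?_⟩
    rcases lt_or_gt_of_ne hmn with h | h
    · exact (hu n).2.1 m h
    · exact inner_eq_zero_symm.1 ((hu m).2.1 n h)
  let A : ℕ → Set H := fun k => u '' {n | (Nat.unpair n).1 = k}
  refine ⟨fun k => (Submodule.span ℂ (A k)).topologicalClosure,
    fun k => Submodule.isClosed_topologicalClosure _, ?_, ?_⟩
  · intro k l hkl
    have h0 : Submodule.span ℂ (A k) ⟂ Submodule.span ℂ (A l) := by
      rw [Submodule.isOrtho_span]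
      rintro _ ⟨m, hm, rfl⟩ _ ⟨n, hn, rfl⟩
      refine hon.2 ?_
      rintro rfl
      exact hkl (hm.symm.trans hn)
    have h1 : (Submodule.span ℂ (A k)).topologicalClosure ⟂
        (Submodule.span ℂ (A l)).topologicalClosure := by
      have h2 : (Submodule.span ℂ (A k)).topologicalClosure ⟂ Submodule.span ℂ (A l) :=
        Submodule.topologicalClosure_minimal _ h0 (Submodule.isClosed_orthogonal _)
      have h3 : (Submodule.span ℂ (A l)).topologicalClosure ⟂
          (Submodule.span ℂ (A k)).topologicalClosure :=
        Submodule.topologicalClosure_minimal _ h2.symm (Submodule.isClosed_orthogonal _)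
      exact h3.symm
    exact Submodule.isOrtho_iff_inner_eq.1 h1
  · intro k lam hlam
    have hden : ∀ m : ℕ, ∃ j, dist (⟨lam, hlam⟩ : D) (d j) < 1 / ((m : ℝ) + 1) := fun m =>
      (TopologicalSpace.denseRange_denseSeq D).exists_dist_lt _ (by positivity)
    choose j hj using hden
    let N : ℕ → ℕ := fun m => Nat.pair k (Nat.pair (j m) m)
    have hN : Function.Injective N := by
      intro a b hab
      simp only [N, Nat.pair_eq_pair] at hab
      exact hab.2.2
    have hNm : ∀ m, m ≤ N m := fun m =>
      (Nat.right_le_pair _ _).trans (Nat.right_le_pair _ _)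
    refine ⟨u ∘ N, hon.comp N hN, fun m => Submodule.le_topologicalClosure _
      (Submodule.subset_span ⟨N m, by simp [N], rfl⟩), ?_⟩
    rw [tendsto_iff_norm_sub_tendsto_zero]
    have hb : Tendsto (fun m : ℕ => 1 / ((m : ℝ) + 1) + 1 / ((m : ℝ) + 1)) atTop (nhds 0) := by
      simpa using (tendsto_one_div_add_atTop_nhds_zero_nat (𝕜 := ℝ)).add
        (tendsto_one_div_add_atTop_nhds_zero_nat (𝕜 := ℝ))
    refine squeeze_zero (fun _ => norm_nonneg _) (fun m => ?_) hb
    have h1 := (hu (N m)).2.2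
    have ht : tgt (N m) = d (j m) := by simp [tgt, N]
    rw [ht] at h1
    have h2 := hj m
    rw [Subtype.dist_eq, dist_comm, dist_eq_norm] at h2
    have h3 : 1 / ((N m : ℝ) + 1) ≤ 1 / ((m : ℝ) + 1) := by
      have : (m : ℝ) ≤ N m := by exact_mod_cast hNm m
      gcongr
    have h4 := norm_sub_le_norm_sub_add_norm_sub (⟪T (u (N m)), u (N m)⟫) (d (j m) : ℂ) lam
    simp only [Function.comp]
    refine h4.trans (add_le_add (h1.le.trans h3) h2.le)
end

section
/- Let H be a complex separable infinite-dimensional Hilbert space and T a bounded operator on H whose polynomial hull of the spectrum satisfies σ̂(T) ⊇ closed unit disc. Let n ≥ 1, let L be a nonzero separable complex Hilbert space, and let C, A_1, …, A_n be bounded operators on L with ‖C‖ < 1 and ‖A_j‖ ≤ (1 − ‖C‖)^n / (n · 2^{2n+4}) for each j = 1, …, n. Then there exists a closed subspace K ⊂ H and a unitary U : L → K such that ⟨T^j (U u), U v⟩ = ⟨(C^j + A_j) u, v⟩ for all u, v ∈ L and all j = 1, …, n; that is, the compression of the tuple (T, T², …, T^n) to K is jointly unitarily equivalent to (C + A_1,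 C² + A_2, …, C^n + A_n). -/
open Filter Metric
open scoped ComplexInnerProductSpace

/-- The polynomial hull of a set `K ⊂ ℂ`. -/
def polyHull (K : Set ℂ) : Set ℂ :=
  {z | ∀ p : Polynomial ℂ, ‖p.eval z‖ ≤ sSup ((fun w => ‖p.eval w‖) '' K)}

section povm
variable {L : Type*} [NormedAddCommGroup L] [InnerProductSpace ℂ L]

lemma aux_poisson_lower (Z : L →L[ℂ] L) (c : ℝ) (hc0 : 0 ≤ c) (hc1 : c < 1) (hZ : ‖Z‖ ≤ c)
    (m : ℕ) (hm : c ^ m ≤ (1 - c) / 16) (x : L) :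
    (1 - c) / 8 * ‖x‖ ^ 2 ≤
      (⟪x, (2 : ℂ) • (∑ k ∈ Finset.range m, (Z ^ k) x) - x⟫).re := by
  set y := ∑ k ∈ Finset.range m, (Z ^ k) x with hy
  have hye : y - x = Z y - (Z ^ m) x := by
    have h1 : Z y = ∑ k ∈ Finset.range m, (Z ^ (k+1)) x := by
      rw [hy, map_sum]
      refine Finset.sum_congr rfl fun k _ => ?_
      rw [pow_succ']; rfl
    have h2 := Finset.sum_range_succ (fun k => (Z ^ k) x) m
    have h3 := Finset.sum_range_succ' (fun k => (Z ^ k) x) m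
    simp only [pow_zero, one_apply_eq_self] at h3
    rw [h1]
    rw [h2] at h3
    rw [← hy] at h3
    rw [sub_eq_sub_iff_add_eq_add, h3]
  have he : ‖(Z ^ m) x‖ ≤ c ^ m * ‖x‖ := by
    refine (ContinuousLinearMap.le_opNorm _ _).trans ?_
    gcongr
    calc ‖Z ^ m‖ ≤ ‖Z‖ ^ m := by
          rcases Nat.eq_zero_or_pos m with h | h
          · subst h
            simp only [pow_zero]
            exact ContinuousLinearMap.norm_id_le
          · exact norm_pow_le' _ h
      _ ≤ c ^ m := by gcongr
  have hZy : ‖Z y‖ ≤ c * ‖y‖ := (Z.le_opNorm y).trans (by gcongr)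
  have hid : (⟪x, (2 : ℂ) • y - x⟫).re = ‖y‖ ^ 2 - ‖y - x‖ ^ 2 := by
    have := @norm_sub_sq ℂ L _ _ _ y x
    have h2 : (⟪x, x⟫).re = ‖x‖ ^ 2 := by
      have := @inner_self_eq_norm_sq ℂ L _ _ _ x
      simpa using this
    have h3 : (⟪x, y⟫).re = (⟪y, x⟫).re := by
      rw [← inner_conj_symm, Complex.conj_re]
    simp only [RCLike.re_to_complex] at this
    rw [this, inner_sub_right, inner_smul_right]
    rw [Complex.sub_re, h2]
    simp only [Complex.mul_re, Complex.re_ofNat, Complex.im_ofNat, zero_mul, sub_zero, h3]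
    ring
  have hn1 : ‖y - x‖ ≤ c * ‖y‖ + c ^ m * ‖x‖ := by
    rw [hye]
    exact (norm_sub_le _ _).trans (add_le_add hZy he)
  have hn2 : ‖x‖ ≤ ‖y‖ + ‖y - x‖ := by
    have : x = y - (y - x) := by abel
    calc ‖x‖ = ‖y - (y - x)‖ := by rw [← this]
      _ ≤ _ := norm_sub_le _ _
  rw [hid]
  set a := ‖x‖
  set b := ‖y‖
  set d := ‖y - x‖
  have ha : 0 ≤ a := norm_nonneg _
  have hb : 0 ≤ b := norm_nonneg _
  have hd : 0 ≤ d := norm_nonneg _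
  have h4 : c ^ m * a ≤ (1 - c) / 16 * a := by gcongr
  have h5 : 15 / 32 * a ≤ b := by nlinarith
  have h6 : (1 - c) * (13 / 32) * a ≤ b - d := by nlinarith
  have h7 : 0 ≤ (1 - c) * (13/32) * a := by
    apply mul_nonneg (by linarith) ha
  have h8 : ((1 - c) * (13 / 32) * a) * (15/32 * a) ≤ (b - d) * (b + d) := by
    apply mul_le_mul h6 (by linarith) (by positivity) (by linarith)
  nlinarith [mul_nonneg (sub_nonneg.2 hc1.le) (mul_nonneg ha ha)]

variable [CompleteSpace L]

open ContinuousLinearMap in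
lemma aux_povm_general (K : ℕ) (X : ℕ → L →L[ℂ] L)
    (hpos : ∀ w : ℂ, ‖w‖ = 1 → ∀ x : L,
      0 ≤ ‖x‖ ^ 2 + 2 * (⟪x, ∑ k ∈ Finset.range K, (star w) ^ (k+1) • X k x⟫).re) :
    ∃ (N : ℕ) (w : Fin N → ℂ) (B : Fin N → L →L[ℂ] L), (∀ i, ‖w i‖ = 1) ∧
      (∑ i, (adjoint (B i)) ∘L (B i) = 1) ∧
      ∀ k < K, ∑ i, (w i) ^ (k+1) • ((adjoint (B i)) ∘L (B i)) = X k := by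
  set N : ℕ := 2 * K + 2 with hN
  have hN0 : N ≠ 0 := by omega
  obtain ⟨ζ, hζ⟩ : ∃ ζ : ℂ, IsPrimitiveRoot ζ N := ⟨_, Complex.isPrimitiveRoot_exp N hN0⟩
  have hζn : ‖ζ‖ = 1 := hζ.norm'_eq_one hN0
  have hζs : ζ * star ζ = 1 := by
    have := Complex.mul_conj ζ
    rw [Complex.normSq_eq_norm_sq, hζn] at this
    simpa using this
  set w : Fin N → ℂ := fun i => ζ ^ (i : ℕ) with hw
  have hwn : ∀ i, ‖w i‖ = 1 := fun i => by simp [hw, hζn]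
  -- geometric sums
  have hgeom : ∀ ξ : ℂ, ξ ^ N = 1 → ξ ≠ 1 → ∑ i : Fin N, ξ ^ (i : ℕ) = 0 := by
    intro ξ h1 h2
    rw [Fin.sum_univ_eq_sum_range (fun i => ξ ^ i) N]
    have := geom_sum_eq h2 N
    rw [this, h1]; simp
  have hs1 : ∀ a, 0 < a → a < N → ∑ i : Fin N, (w i) ^ a = 0 := by
    intro a h0 h1
    have := hgeom (ζ ^ a) (by rw [← pow_mul, mul_comm, pow_mul, hζ.pow_eq_one, one_pow])
      (hζ.pow_ne_one_of_pos_of_lt (by omega) h1)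
    rw [← this]
    refine Finset.sum_congr rfl fun i _ => ?_
    simp only [hw]; rw [← pow_mul, ← pow_mul, mul_comm]
  have hs2 : ∀ a, 0 < a → a < N → ∑ i : Fin N, (star (w i)) ^ a = 0 := by
    intro a h0 h1
    have := congrArg star (hs1 a h0 h1)
    simpa [star_sum] using this
  have hs3 : ∀ a b, a < N → b < N →
      ∑ i : Fin N, (w i) ^ a * (star (w i)) ^ b = if a = b then (N : ℂ) else 0 := by
    intro a b ha hb
    split_ifs with hab
    · subst hab
      have : ∀ i : Fin N, (w i) ^ a * (star (w i)) ^ a = 1 := by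
        intro i
        simp only [hw, star_pow]
        rw [← mul_pow, ← mul_pow, hζs, one_pow, one_pow]
      simp only [this]
      simp
    · have := hgeom (ζ ^ a * star ζ ^ b) (by
        rw [mul_pow, ← pow_mul, ← pow_mul, mul_comm a, mul_comm b, pow_mul, pow_mul,
          ← star_pow, hζ.pow_eq_one]; simp) (by
        intro h
        apply hab
        apply hζ.pow_inj ha hb
        calc ζ ^ a = ζ ^ a * (ζ * star ζ) ^ b := by rw [hζs]; simp
          _ = (ζ ^ a * star ζ ^ b) * ζ ^ b := by rw [mul_pow]; ring
          _ = ζ ^ b := by rw [h, one_mul])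
      rw [← this]
      refine Finset.sum_congr rfl fun i _ => ?_
      simp only [hw, star_pow]
      rw [mul_pow, ← pow_mul, ← pow_mul, ← pow_mul, ← pow_mul, mul_comm a, mul_comm b]
  set E : Fin N → L →L[ℂ] L := fun i => ((N : ℂ)⁻¹) • (1 + ∑ k ∈ Finset.range K,
    ((star (w i)) ^ (k+1) • X k + (w i) ^ (k+1) • adjoint (X k))) with hE
  have hEpos : ∀ i, 0 ≤ E i := by
    intro i
    rw [nonneg_iff_isPositive]
    have hsa : (1 + ∑ k ∈ Finset.range K,
      ((star (w i)) ^ (k+1) • X k + (w i) ^ (k+1) • adjoint (X k))).IsPositive := by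
      rw [isPositive_def']
      constructor
      · rw [isSelfAdjoint_iff]
        simp only [star_add, star_sum, star_one, star_smul, star_pow, star_star]
        congr 1
        refine Finset.sum_congr rfl fun k _ => ?_
        rw [add_comm]
        congr 1
        · simp [star_eq_adjoint]
      · intro x
        have h := hpos (w i) (hwn i) x
        rw [reApplyInnerSelf_apply]
        simp only [add_apply, one_apply_eq_self, sum_apply, smul_apply, inner_add_left, sum_inner,
          inner_smul_left, adjoint_inner_left, inner_self_eq_norm_sq_to_K] at h ⊢
        simp only [inner_sum, inner_smul_right] at h
        have h2 : ∀ k, (⟪X k x, x⟫) = star (⟪x, X k x⟫) := fun k => (inner_conj_symm _ _).symm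
        simp only [h2]
        convert h using 1
        simp only [map_add, map_sum, RCLike.re_to_complex, Complex.re_sum]
        rw [Finset.mul_sum]
        congr 1
        · norm_cast
        · refine Finset.sum_congr rfl fun k _ => ?_
          simp only [Complex.star_def, map_pow, Complex.conj_conj]
          rw [two_mul]
          congr 1
          rw [← Complex.conj_re, map_mul, map_pow, Complex.conj_conj]
    open scoped ComplexOrder in
    have h3 : (0:ℂ) ≤ ((N:ℂ)⁻¹) := by
      rw [show ((N:ℂ)⁻¹) = (((N:ℝ)⁻¹ : ℝ) : ℂ) by push_cast; rfl]
      exact_mod_cast (by positivity : (0:ℝ) ≤ (N:ℝ)⁻¹)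
    open scoped ComplexOrder in
    exact hsa.smul_of_nonneg h3
  have hEsum : ∀ a : ℕ, a ≤ K → ∑ i, (w i) ^ a • E i = ((N : ℂ)⁻¹) • ((∑ i, (w i)^a) • (1 : L →L[ℂ] L)
      + ∑ k ∈ Finset.range K, ((∑ i, (w i) ^ a * (star (w i)) ^ (k+1)) • X k +
        (∑ i, (w i) ^ (a + (k+1))) • adjoint (X k))) := by
    intro a _
    simp only [hE]
    simp_rw [smul_comm _ ((N:ℂ)⁻¹)]
    rw [← Finset.smul_sum]
    congr 1
    simp only [smul_add, Finset.smul_sum, Finset.sum_add_distrib, Finset.sum_smul, smul_smul, pow_add]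
    congr 1
    congr 1 <;> rw [Finset.sum_comm]
  have hNc : (N:ℂ) ≠ 0 := by exact_mod_cast hN0
  have hsum0 : ∑ i, E i = 1 := by
    have := hEsum 0 (by omega)
    simp only [pow_zero, one_smul, one_mul, zero_add] at this
    rw [this]
    rw [Finset.sum_eq_zero (s := Finset.range K)]
    · simp [smul_smul, hNc]
    · intro k hk
      rw [Finset.mem_range] at hk
      rw [hs2 (k+1) (by omega) (by omega), hs1 (k+1) (by omega) (by omega)]
      simp
  have hsumk : ∀ j < K, ∑ i, (w i) ^ (j+1) • E i = X j := by
    intro j hj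
    rw [hEsum (j+1) (by omega), hs1 (j+1) (by omega) (by omega)]
    rw [Finset.sum_eq_single j]
    · rw [hs3 _ _ (by omega) (by omega), hs1 _ (by omega) (by omega)]
      simp [smul_smul, hNc]
    · intro k hk hkj
      rw [Finset.mem_range] at hk
      rw [hs3 _ _ (by omega) (by omega), hs1 _ (by omega) (by omega), if_neg (by omega)]
      simp
    · intro h; simp at h; omega
  choose B hB using fun i => CStarAlgebra.nonneg_iff_eq_star_mul_self.1 (hEpos i)
  have hB' : ∀ i, (adjoint (B i)) ∘L (B i) = E i := fun i => (hB i).symm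
  refine ⟨N, w, B, hwn, ?_, ?_⟩
  · simp only [hB', hsum0]
  · intro k hk
    simp only [hB', hsumk k hk]

open ContinuousLinearMap in
lemma aux_povm (n : ℕ) (hn : 1 ≤ n) (C : L →L[ℂ] L) (c : ℝ) (hCc : ‖C‖ ≤ c) (hc1 : c < 1)
    (A : Fin n → L →L[ℂ] L) (hA : ∀ j, ‖A j‖ ≤ (1 - c) / (16 * n)) :
    ∃ (N : ℕ) (w : Fin N → ℂ) (B : Fin N → L →L[ℂ] L), (∀ i, ‖w i‖ = 1) ∧
      (∑ i, (adjoint (B i)) ∘L (B i) = 1) ∧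
      ∀ j : Fin n, ∑ i, (w i) ^ (j.val+1) • ((adjoint (B i)) ∘L (B i)) = C ^ (j.val+1) + A j := by
  have hc0 : 0 ≤ c := (norm_nonneg _).trans hCc
  obtain ⟨m, hm⟩ : ∃ m, c ^ m ≤ (1 - c) / 16 := by
    have := (tendsto_pow_atTop_nhds_zero_of_lt_one hc0 hc1).eventually_le_const
      (show (0:ℝ) < (1 - c)/16 by linarith)
    exact this.exists
  set K := m + n with hK
  have hm' : c ^ (K+1) ≤ (1 - c) / 16 :=
    (pow_le_pow_of_le_one hc0 hc1.le (by omega)).trans hm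
  set A' : ℕ → L →L[ℂ] L := fun k => if h : k < n then A ⟨k, h⟩ else 0 with hA'
  set X : ℕ → L →L[ℂ] L := fun k => C ^ (k+1) + A' k with hX
  obtain ⟨N, w, B, h1, h2, h3⟩ := aux_povm_general K X (by
    intro w hw x
    have hZ : ‖star w • C‖ ≤ c := by
      rw [norm_smul, norm_star, hw, one_mul]; exact hCc
    have hl := aux_poisson_lower (star w • C) c hc0 hc1 hZ (K+1) hm' x
    have e1 : (2:ℂ) • (∑ k ∈ Finset.range (K+1), ((star w • C) ^ k) x) - x
        = x + (2:ℂ) • (∑ k ∈ Finset.range K, (star w)^(k+1) • (C ^ (k+1)) x) := by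
      rw [Finset.sum_range_succ']
      simp only [pow_zero, one_apply_eq_self, smul_add, two_smul, smul_pow, smul_apply]
      abel
    have e2 : (∑ k ∈ Finset.range K, (star w) ^ (k+1) • X k x) =
        (∑ k ∈ Finset.range K, (star w)^(k+1) • (C ^ (k+1)) x) +
        ∑ k ∈ Finset.range K, (star w)^(k+1) • A' k x := by
      rw [← Finset.sum_add_distrib]
      refine Finset.sum_congr rfl fun k _ => ?_
      simp [hX]
    have e3 : ‖∑ k ∈ Finset.range K, (star w)^(k+1) • A' k x‖ ≤ (1 - c)/16 * ‖x‖ := by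
      have : ∑ k ∈ Finset.range K, (star w)^(k+1) • A' k x
          = ∑ k ∈ Finset.range n, (star w)^(k+1) • A' k x := by
        symm
        apply Finset.sum_subset
        · intro a; simp; omega
        · intro k _ hk
          simp at hk
          simp [hA', not_lt.2 hk]
      rw [this]
      calc _ ≤ ∑ k ∈ Finset.range n, (1 - c) / (16 * n) * ‖x‖ := by
            refine norm_sum_le_of_le _ fun k hk => ?_
            rw [Finset.mem_range] at hk
            rw [norm_smul, norm_pow, norm_star, hw, one_pow, one_mul]
            refine (le_opNorm _ _).trans ?_
            gcongr
            simp only [hA', hk, dif_pos]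
            exact hA _
        _ = (1 - c)/16 * ‖x‖ := by
            have : (n:ℝ) ≠ 0 := by positivity
            simp only [Finset.sum_const, Finset.card_range, nsmul_eq_mul]
            field_simp
    rw [e1, inner_add_right, inner_smul_right] at hl
    rw [e2, inner_add_right]
    have e4 : (⟪x, x⟫).re = ‖x‖ ^ 2 := by
      have := @inner_self_eq_norm_sq ℂ L _ _ _ x
      simpa using this
    set Q := ∑ k ∈ Finset.range K, (star w)^(k+1) • A' k x
    have e5 : -(‖x‖ * ((1 - c)/16 * ‖x‖)) ≤ (⟪x, Q⟫).re := by
      have a1 := Complex.abs_re_le_norm (⟪x, Q⟫)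
      have a2 := norm_inner_le_norm (𝕜 := ℂ) x Q
      have a3 : ‖x‖ * ‖Q‖ ≤ ‖x‖ * ((1 - c)/16 * ‖x‖) := by gcongr
      have a4 := neg_abs_le (⟪x, Q⟫).re
      linarith
    simp only [Complex.add_re, e4, Complex.mul_re, Complex.re_ofNat, Complex.im_ofNat, zero_mul, sub_zero] at hl ⊢
    nlinarith)
  refine ⟨N, w, B, h1, h2, fun j => ?_⟩
  rw [h3 j (by omega)]
  simp [hX, hA']
end povm

section essrange
variable {H : Type*} [NormedAddCommGroup H] [InnerProductSpace ℂ H] [CompleteSpace H]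

open Classical in
lemma aux_seq (T : H →L[ℂ] H) (n : ℕ) (P : ℕ → H → Prop)
    (h : ∀ m (s : Finset H), ∃ x, P m x ∧ ∀ y ∈ s, ⟪y, x⟫ = 0) :
    ∃ x : ℕ → H, (∀ m, P m (x m)) ∧ ∀ a b, a ≠ b → ∀ j ≤ n, ⟪x a, (T ^ j) (x b)⟫ = 0 := by
  choose ψ hψP hψ using h
  set t : Finset H → Finset H := fun s =>
    (s ×ˢ Finset.range (n+1)).image (fun q => (T ^ q.2) q.1) ∪
    (s ×ˢ Finset.range (n+1)).image (fun q => ContinuousLinearMap.adjoint (T ^ q.2) q.1) with ht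
  set S : ℕ → Finset H := fun m => Nat.rec ∅ (fun m s => insert (ψ m (t s)) s) m with hS
  have hSs : ∀ m, S (m+1) = insert (ψ m (t (S m))) (S m) := fun m => rfl
  set x : ℕ → H := fun m => ψ m (t (S m)) with hx
  have hmono : ∀ a b, a < b → x a ∈ S b := by
    intro a b hab
    induction b with
    | zero => omega
    | succ b ih =>
      rw [hSs]
      rcases Nat.lt_succ_iff_lt_or_eq.1 hab with h | h
      · exact Finset.mem_insert_of_mem (ih h)
      · subst h; exact Finset.mem_insert_self _ _
  have key1 : ∀ a b, a < b → ∀ j ≤ n, ⟪(T ^ j) (x a), x b⟫ = 0 := by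
    intro a b hab j hj
    apply hψ
    simp only [ht, Finset.mem_union, Finset.mem_image, Finset.mem_product, Finset.mem_range]
    exact Or.inl ⟨(x a, j), ⟨hmono a b hab, by simp; omega⟩, rfl⟩
  have key2 : ∀ a b, a < b → ∀ j ≤ n, ⟪x a, (T ^ j) (x b)⟫ = 0 := by
    intro a b hab j hj
    rw [← ContinuousLinearMap.adjoint_inner_left]
    apply hψ
    simp only [ht, Finset.mem_union, Finset.mem_image, Finset.mem_product, Finset.mem_range]
    exact Or.inr ⟨(x a, j), ⟨hmono a b hab, by simp; omega⟩, rfl⟩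
  refine ⟨x, fun m => hψP _ _, fun a b hab j hj => ?_⟩
  rcases lt_or_gt_of_ne hab with h | h
  · exact key2 a b h j hj
  · rw [← inner_conj_symm, key1 b a h j hj, map_zero]

/-- The joint quadratic form of the powers of `T`. -/
noncomputable def auxLam (T : H →L[ℂ] H) (n : ℕ) (x : H) : Fin n → ℂ := fun j => ⟪x, (T ^ (j.val+1)) x⟫

lemma aux_comb (T : H →L[ℂ] H) (n : ℕ) (x : ℕ → H) (hx1 : ∀ a, ‖x a‖ = 1)
    (hx : ∀ a b, a ≠ b → ∀ j ≤ n, ⟪x a, (T ^ j) (x b)⟫ = 0) (s : Finset H)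
    (hs : ∀ a, ∀ y ∈ s, ⟪y, x a⟫ = 0) (I : Finset ℕ) (t : ℕ → ℝ) (ht : ∀ a ∈ I, 0 ≤ t a)
    (ht1 : ∑ a ∈ I, t a = 1) :
    ∃ X : H, ‖X‖ = 1 ∧ (∀ y ∈ s, ⟪y, X⟫ = 0) ∧
      auxLam T n X = ∑ a ∈ I, t a • auxLam T n (x a) := by
  set X : H := ∑ a ∈ I, ((Real.sqrt (t a) : ℝ) : ℂ) • x a with hX
  have key : ∀ j ≤ n, ⟪X, (T ^ j) X⟫ = ∑ a ∈ I, (t a : ℂ) * ⟪x a, (T ^ j) (x a)⟫ := by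
    intro j hj
    rw [hX, map_sum, sum_inner]
    refine Finset.sum_congr rfl fun a ha => ?_
    rw [inner_sum, Finset.sum_eq_single a]
    · rw [map_smul, inner_smul_left, inner_smul_right, ← mul_assoc, Complex.conj_ofReal,
        ← Complex.ofReal_mul, Real.mul_self_sqrt (ht a ha)]
    · intro b _ hb
      rw [map_smul, inner_smul_left, inner_smul_right, hx a b hb.symm j hj]
      simp
    · intro h; exact absurd ha h
  refine ⟨X, ?_, ?_, ?_⟩
  · have h0 := key 0 (by omega)
    simp only [pow_zero, one_apply_eq_self, inner_self_eq_norm_sq_to_K, hx1] at h0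
    have : (∑ a ∈ I, (t a : ℂ)) = 1 := by exact_mod_cast ht1
    simp only [RCLike.ofReal_one, Complex.coe_algebraMap, one_pow, mul_one, this] at h0
    have h1 : ‖X‖ ^ 2 = 1 := by exact_mod_cast h0
    nlinarith [norm_nonneg X]
  · intro y hy
    rw [hX, inner_sum]
    refine Finset.sum_eq_zero fun a _ => ?_
    rw [inner_smul_right, hs a y hy, mul_zero]
  · funext j
    simp only [auxLam, Finset.sum_apply, Pi.smul_apply, Complex.real_smul]
    exact key _ (by omega)

/-- The joint essential numerical range of `(T, …, T^n)`. -/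
def auxEss (T : H →L[ℂ] H) (n : ℕ) : Set (Fin n → ℂ) :=
  {v | ∀ (s : Finset H) (ε : ℝ), 0 < ε → ∃ x : H, ‖x‖ = 1 ∧ (∀ y ∈ s, ⟪y, x⟫ = 0) ∧
    ‖auxLam T n x - v‖ < ε}

open Classical in
lemma aux_approx (T : H →L[ℂ] H) (n : ℕ) (p : ℕ → Fin n → ℂ) (hp : ∀ m, p m ∈ auxEss T n)
    (s : Finset H) (ε : ℝ) (hε : 0 < ε) :
    ∃ x : ℕ → H, (∀ a, ‖x a‖ = 1) ∧ (∀ a b, a ≠ b → ∀ j ≤ n, ⟪x a, (T ^ j) (x b)⟫ = 0) ∧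
      (∀ a, ∀ y ∈ s, ⟪y, x a⟫ = 0) ∧ ∀ a, ‖auxLam T n (x a) - p a‖ < ε := by
  obtain ⟨x, h1, h2⟩ := aux_seq T n
    (fun m x => ‖x‖ = 1 ∧ (∀ y ∈ s, ⟪y, x⟫ = 0) ∧ ‖auxLam T n x - p m‖ < ε) (by
      intro m s'
      obtain ⟨x, hx1, hx2, hx3⟩ := hp m (s ∪ s') ε hε
      exact ⟨x, ⟨hx1, fun y hy => hx2 y (Finset.mem_union_left _ hy), hx3⟩,
        fun y hy => hx2 y (Finset.mem_union_right _ hy)⟩)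
  exact ⟨x, fun a => (h1 a).1, h2, fun a => (h1 a).2.1, fun a => (h1 a).2.2⟩

lemma aux_ess_convex (T : H →L[ℂ] H) (n : ℕ) : Convex ℝ (auxEss T n) := by
  intro v hv v' hv' a b ha hb hab s ε hε
  obtain ⟨x, h1, h2, h3, h4⟩ := aux_approx T n (fun m => if m = 0 then v else v')
    (by intro m; split_ifs <;> assumption) s ε hε
  obtain ⟨X, hX1, hX2, hX3⟩ := aux_comb T n x h1 h2 s h3 (Finset.range 2)
    (fun m => if m = 0 then a else b) (by intro m _; split_ifs <;> assumption)
    (by simp [Finset.sum_range_succ, hab])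
  refine ⟨X, hX1, hX2, ?_⟩
  rw [hX3]
  have h40 := h4 0
  have h41 := h4 1
  simp only [Finset.sum_range_succ, Finset.sum_range_zero, zero_add, if_true, one_ne_zero, if_false] at h40 h41 ⊢
  have : a • auxLam T n (x 0) + b • auxLam T n (x 1) - (a • v + b • v') =
      a • (auxLam T n (x 0) - v) + b • (auxLam T n (x 1) - v') := by
    simp only [smul_sub]; abel
  rw [this]
  calc _ ≤ a * ‖auxLam T n (x 0) - v‖ + b * ‖auxLam T n (x 1) - v'‖ := by
        refine (norm_add_le _ _).trans ?_
        rw [norm_smul, norm_smul, Real.norm_of_nonneg ha, Real.norm_of_nonneg hb]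
    _ < a * ε + b * ε := by
        rcases eq_or_lt_of_le ha with h | h
        · subst h
          have : b = 1 := by linarith
          subst this; linarith
        · have i1 := mul_lt_mul_of_pos_left h40 h
          have i2 := mul_le_mul_of_nonneg_left h41.le hb
          linarith
    _ = ε := by rw [← add_mul, hab, one_mul]

lemma aux_ess_closed (T : H →L[ℂ] H) (n : ℕ) : IsClosed (auxEss T n) := by
  rw [← closure_subset_iff_isClosed]
  intro v hv s ε hε
  obtain ⟨w, hw, hwv⟩ := Metric.mem_closure_iff.1 hv (ε/2) (by linarith)
  obtain ⟨x, h1, h2, h3⟩ := hw s (ε/2) (by linarith)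
  refine ⟨x, h1, h2, ?_⟩
  rw [dist_eq_norm, norm_sub_rev] at hwv
  calc ‖auxLam T n x - v‖ = ‖(auxLam T n x - w) + (w - v)‖ := by congr 1; abel
    _ ≤ _ := norm_add_le _ _
    _ < ε := by linarith

/-- Interior points of the essential numerical range are exactly attained. -/
lemma aux_exact (T : H →L[ℂ] H) (n : ℕ) (v : Fin n → ℂ) (hv : auxEss T n ∈ nhds v)
    (s : Finset H) : ∃ X : H, ‖X‖ = 1 ∧ (∀ y ∈ s, ⟪y, X⟫ = 0) ∧ auxLam T n X = v := by
  obtain ⟨d, b, hd0, hb1, hb2⟩ : ∃ (d : ℕ) (b : Fin d → Fin n → ℂ), 0 < d ∧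
      v ∈ interior (convexHull ℝ (Set.range b)) ∧ convexHull ℝ (Set.range b) ⊆ auxEss T n := by
    obtain ⟨b, hb1, hb2⟩ := exists_mem_interior_convexHull_affineBasis hv
    exact ⟨_, b, Nat.succ_pos _, hb1, hb2⟩
  obtain ⟨δ, hδ, hball⟩ := Metric.nhds_basis_closedBall.mem_iff.1 (mem_interior_iff_mem_nhds.1 hb1)
  set p : ℕ → Fin n → ℂ := fun m => if h : m < d then b ⟨m, h⟩ else b ⟨0, hd0⟩ with hp
  have hbm : ∀ i, b i ∈ auxEss T n := fun i => hb2 (subset_convexHull ℝ _ ⟨i, rfl⟩)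
  obtain ⟨x, h1, h2, h3, h4⟩ := aux_approx T n p
    (by intro m; simp only [hp]; split_ifs <;> exact hbm _) s (δ/2) (by linarith)
  have hmem : v ∈ convexHull ℝ (((Finset.range d).image (fun a => auxLam T n (x a)) : Finset _) : Set (Fin n → ℂ)) := by
    by_contra hcon
    obtain ⟨f, u, hf1, hf2⟩ := geometric_hahn_banach_closed_point (convex_convexHull ℝ _)
      (Set.Finite.isClosed_convexHull ℝ (Finset.finite_toSet _)) hcon
    have hfb : ∀ y ∈ convexHull ℝ (Set.range b), f y ≤ u + ‖f‖ * (δ/2) := by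
      have : convexHull ℝ (Set.range b) ⊆ {y | f y ≤ u + ‖f‖ * (δ/2)} := by
        apply convexHull_min
        · rintro _ ⟨i, rfl⟩
          have e1 := hf1 (auxLam T n (x i)) (subset_convexHull ℝ _ (by
            simp only [Finset.coe_image, Set.mem_image, Finset.coe_range, Set.mem_Iio]
            exact ⟨i, i.2, rfl⟩))
          have e2 := h4 i
          have e3 : p i = b i := by simp [hp]
          rw [e3] at e2
          have e4 := f.le_opNorm (b i - auxLam T n (x i))
          rw [norm_sub_rev] at e4
          have e5 : ‖f‖ * ‖auxLam T n (x i) - b i‖ ≤ ‖f‖ * (δ/2) := by gcongr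
          have e6 := Real.le_norm_self (f (b i - auxLam T n (x i)))
          rw [map_sub] at e6
          rw [map_sub] at e4
          simp only [Set.mem_setOf_eq]
          linarith
        · exact convex_halfSpace_le f.isLinear _
      exact this
    have hfh : ∀ h : Fin n → ℂ, ‖h‖ ≤ δ → f h ≤ ‖f‖ * (δ/2) := by
      intro h hh
      have := hfb (v + h) (hball (by simpa using hh))
      rw [map_add] at this
      linarith
    have hfn : ‖f‖ ≤ ‖f‖ / 2 := by
      apply f.opNorm_le_bound (by positivity)
      intro h
      rcases eq_or_ne h 0 with h0 | h0
      · simp [h0]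
      have hh : 0 < ‖h‖ := norm_pos_iff.2 h0
      have k1 := hfh ((δ / ‖h‖) • h) (by
        rw [norm_smul, Real.norm_of_nonneg (by positivity), div_mul_cancel₀ _ hh.ne'])
      have k2 := hfh (-((δ / ‖h‖) • h)) (by
        rw [norm_neg, norm_smul, Real.norm_of_nonneg (by positivity), div_mul_cancel₀ _ hh.ne'])
      rw [map_neg, map_smul, smul_eq_mul] at k2
      rw [map_smul, smul_eq_mul] at k1
      have k3 : (δ / ‖h‖) * |f h| ≤ ‖f‖ * (δ/2) := by
        rcases abs_cases (f h) with ⟨h, _⟩ | ⟨h, _⟩ <;> rw [h] <;> linarith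
      rw [Real.norm_eq_abs]
      rw [div_mul_eq_mul_div, div_le_iff₀ hh] at k3
      have : δ * |f h| ≤ δ * (‖f‖ / 2 * ‖h‖) := by linarith
      exact le_of_mul_le_mul_left this hδ
    have hf0 : f = 0 := by
      have : ‖f‖ ≤ 0 := by linarith
      exact norm_le_zero_iff.1 this
    have e1 := hf1 (auxLam T n (x 0)) (subset_convexHull ℝ _ (by
            simp only [Finset.coe_image, Set.mem_image, Finset.coe_range, Set.mem_Iio]
            exact ⟨0, hd0, rfl⟩))
    subst hf0
    simp at e1 hf2
    linarith
  have hmem2 : ∃ t : ℕ → ℝ, (∀ a ∈ Finset.range d, 0 ≤ t a) ∧ ∑ a ∈ Finset.range d, t a = 1 ∧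
      ∑ a ∈ Finset.range d, t a • auxLam T n (x a) = v := by
    have : convexHull ℝ (((Finset.range d).image (fun a => auxLam T n (x a)) : Finset _) : Set (Fin n → ℂ))
        ⊆ {v | ∃ t : ℕ → ℝ, (∀ a ∈ Finset.range d, 0 ≤ t a) ∧ ∑ a ∈ Finset.range d, t a = 1 ∧
      ∑ a ∈ Finset.range d, t a • auxLam T n (x a) = v} := by
      apply convexHull_min
      · intro y hy
        simp only [Finset.coe_image, Set.mem_image, Finset.coe_range, Set.mem_Iio] at hy
        obtain ⟨a, ha, rfl⟩ := hy
        refine ⟨fun m => if m = a then 1 else 0, ?_, ?_, ?_⟩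
        · intro m _; dsimp only; split_ifs <;> norm_num
        · simp [ha]
        · simp [ha]
      · rintro y ⟨t, ht1, ht2, ht3⟩ y' ⟨t', ht1', ht2', ht3'⟩ a b ha hb hab
        refine ⟨fun m => a * t m + b * t' m, ?_, ?_, ?_⟩
        · intro m hm
          have := ht1 m hm
          have := ht1' m hm
          positivity
        · rw [Finset.sum_add_distrib, ← Finset.mul_sum, ← Finset.mul_sum, ht2, ht2']
          linarith
        · simp only [add_smul, mul_smul]
          rw [Finset.sum_add_distrib, ← Finset.smul_sum, ← Finset.smul_sum, ht3, ht3']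
    exact this hmem
  obtain ⟨t, ht1, ht2, ht3⟩ := hmem2
  obtain ⟨X, hX1, hX2, hX3⟩ := aux_comb T n x h1 h2 s h3 (Finset.range d) t ht1 ht2
  exact ⟨X, hX1, hX2, hX3.trans ht3⟩

end essrange

section spectral
variable {H : Type*} [NormedAddCommGroup H] [InnerProductSpace ℂ H] [CompleteSpace H]

lemma aux_re_self (x : H) : (⟪x, x⟫).re = ‖x‖ ^ 2 := by
  have := @inner_self_eq_norm_sq ℂ H _ _ _ x
  simpa only [RCLike.re_to_complex] using this

lemma aux_coercive_re (S : H →L[ℂ] H) (u : ℝ) (hS : ∀ x, (⟪x, S x⟫).re ≤ u * ‖x‖ ^ 2)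
    (w : ℂ) (x : H) :
    (w.re - u) * ‖x‖ ^ 2 ≤ (⟪x, (algebraMap ℂ (H →L[ℂ] H) w - S) x⟫).re := by
  have h1 : (algebraMap ℂ (H →L[ℂ] H) w - S) x = w • x - S x := by
    simp [Algebra.algebraMap_eq_smul_one]
  rw [h1, inner_sub_right, inner_smul_right, Complex.sub_re]
  have h2 : (w * ⟪x, x⟫).re = w.re * ‖x‖ ^ 2 := by
    have : (⟪x, x⟫).im = 0 := by
      have := @inner_self_im ℂ H _ _ _ x
      simpa only [RCLike.im_to_complex] using this
    rw [Complex.mul_re, this, aux_re_self]; ring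
  rw [h2]
  have := hS x
  linarith

lemma aux_coercive_lower (S : H →L[ℂ] H) (u : ℝ) (hS : ∀ x, (⟪x, S x⟫).re ≤ u * ‖x‖ ^ 2)
    (w : ℂ) (x : H) :
    (w.re - u) * ‖x‖ ≤ ‖(algebraMap ℂ (H →L[ℂ] H) w - S) x‖ := by
  have h1 := aux_coercive_re S u hS w x
  have h2 := (Complex.re_le_norm _).trans
    (norm_inner_le_norm (𝕜 := ℂ) x ((algebraMap ℂ (H →L[ℂ] H) w - S) x))
  rcases (norm_nonneg x).eq_or_lt with h | h
  · rw [← h]; simp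
  · have : ‖x‖ * ((w.re - u) * ‖x‖) ≤ ‖x‖ * ‖(algebraMap ℂ (H →L[ℂ] H) w - S) x‖ := by
      nlinarith
    exact le_of_mul_le_mul_left this h

lemma aux_coercive_unit (S : H →L[ℂ] H) (u : ℝ) (hS : ∀ x, (⟪x, S x⟫).re ≤ u * ‖x‖ ^ 2)
    (w : ℂ) (hw : u < w.re) : IsUnit (algebraMap ℂ (H →L[ℂ] H) w - S) := by
  apply ContinuousLinearMap.isUnit_of_forall_le_norm_inner_map _ (c := ⟨w.re - u, by linarith⟩)
    (show (0:ℝ) < w.re - u by linarith)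
  intro x
  have h1 := aux_coercive_re S u hS w x
  have h2 := Complex.re_le_norm (⟪x, (algebraMap ℂ (H →L[ℂ] H) w - S) x⟫)
  rw [norm_inner_symm]
  show ‖x‖ ^ 2 * (w.re - u) ≤ _
  linarith

/-- A finite rank perturbation of a coercive operator has discrete spectrum to the right. -/
lemma aux_fin_rank (S R : H →L[ℂ] H) (u u' : ℝ) (huu : u < u')
    (hS : ∀ x, (⟪x, S x⟫).re ≤ u * ‖x‖ ^ 2) (Y : Submodule ℂ H) [FiniteDimensional ℂ Y]
    (hR : ∀ x, R x ∈ Y) : {w ∈ spectrum ℂ (S + R) | u' ≤ w.re}.Finite := by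
  set K : ℂ → H →L[ℂ] H := fun w => R * resolvent S w with hK
  have hKY : ∀ w x, K w x ∈ Y := fun w x => hR _
  set Lw : ℂ → Y →ₗ[ℂ] Y := fun w =>
    LinearMap.id - ((K w).toLinearMap.codRestrict Y (hKY w)) ∘ₗ Y.subtype with hLw
  have hLwa : ∀ w (y : Y), ((Lw w y : Y) : H) = y - K w y := fun w y => rfl
  set g : ℂ → ℂ := fun w => LinearMap.det (Lw w) with hg
  set b := stdOrthonormalBasis ℂ Y with hb
  have hU : ∀ w : ℂ, u < w.re → w ∈ resolventSet ℂ S := fun w hw =>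
    spectrum.mem_resolventSet_iff.2 (aux_coercive_unit S u hS w hw)
  have hopen : IsOpen {w : ℂ | u < w.re} := isOpen_lt continuous_const Complex.continuous_re
  have hgd : DifferentiableOn ℂ g {w : ℂ | u < w.re} := by
    have : g = fun w => ∑ σ : Equiv.Perm (Fin (Module.finrank ℂ Y)),
        ((Equiv.Perm.sign σ : ℤ) : ℂ) * ∏ i, (⟪((b (σ i) : Y) : H), ((b i : Y) : H) - K w (b i)⟫) := by
      funext w
      simp only [hg]
      rw [← LinearMap.det_toMatrix b.toBasis, Matrix.det_apply']
      refine Finset.sum_congr rfl fun σ _ => ?_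
      congr 1
      refine Finset.prod_congr rfl fun i _ => ?_
      rw [LinearMap.toMatrix_apply]
      simp only [OrthonormalBasis.coe_toBasis, OrthonormalBasis.coe_toBasis_repr_apply,
        OrthonormalBasis.repr_apply_apply]
      rfl
    rw [this]
    intro w hw
    apply DifferentiableAt.differentiableWithinAt
    have hres := (spectrum.hasDerivAt_resolvent_const_left (hU w hw)).differentiableAt
    have hKd : ∀ x : H, DifferentiableAt ℂ (fun w => K w x) w := by
      intro x
      have h1 : DifferentiableAt ℂ (fun w => resolvent S w x) w :=
        hres.clm_apply (differentiableAt_const x)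
      exact R.differentiableAt.comp w h1
    apply DifferentiableAt.fun_sum
    intro σ _
    apply DifferentiableAt.const_mul
    apply DifferentiableAt.fun_finsetProd
    intro i _
    have h2 : DifferentiableAt ℂ (fun w => ((b i : Y) : H) - K w (b i)) w :=
      (differentiableAt_const _).sub (hKd _)
    exact (innerSL ℂ ((b (σ i) : Y) : H)).differentiableAt.comp w h2
  have hga : AnalyticOnNhd ℂ g {w : ℂ | u < w.re} := hgd.analyticOnNhd hopen
  have hmulres : ∀ w : ℂ, u < w.re →
      resolvent S w * (algebraMap ℂ (H →L[ℂ] H) w - S) = 1 ∧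
      (algebraMap ℂ (H →L[ℂ] H) w - S) * resolvent S w = 1 := by
    intro w hw
    have := aux_coercive_unit S u hS w hw
    exact ⟨Ring.inverse_mul_cancel _ this, Ring.mul_inverse_cancel _ this⟩
  have hz : ∀ w : ℂ, u < w.re → w ∈ spectrum ℂ (S + R) → g w = 0 := by
    intro w hw hws
    by_contra hne
    apply hws
    have hLu : IsUnit (Lw w) := (LinearMap.isUnit_iff_isUnit_det _).2 (isUnit_iff_ne_zero.2 hne)
    rw [Module.End.isUnit_iff] at hLu
    have h1K : IsUnit (1 - K w) := by
      rw [ContinuousLinearMap.isUnit_iff_bijective]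
      constructor
      · rw [injective_iff_map_eq_zero]
        intro x hx
        have hx' : x = K w x := by
          have : x - K w x = 0 := hx
          exact sub_eq_zero.1 this
        have hxY : x ∈ Y := by rw [hx']; exact hKY w x
        have : Lw w ⟨x, hxY⟩ = 0 := by
          apply Subtype.ext
          rw [hLwa]
          exact hx
        have := hLu.1 (this.trans (map_zero _).symm)
        exact congrArg Subtype.val this
      · intro y
        obtain ⟨v, hv⟩ := hLu.2 ⟨K w y, hKY w y⟩
        have hv' := congrArg Subtype.val hv
        rw [hLwa] at hv'
        refine ⟨y + v, ?_⟩
        show (y + v) - K w (y + v) = y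
        rw [map_add]
        have : (v : H) = K w v + K w y := by
          rw [← sub_eq_iff_eq_add']; exact hv'
        nth_rewrite 1 [this]
        abel
    have hfac : algebraMap ℂ (H →L[ℂ] H) w - (S + R) = (1 - K w) * (algebraMap ℂ (H →L[ℂ] H) w - S) := by
      rw [sub_mul, one_mul, hK]
      simp only [mul_assoc, (hmulres w hw).1, mul_one]
      abel
    rw [spectrum.mem_resolventSet_iff, hfac]
    exact h1K.mul (aux_coercive_unit S u hS w hw)
  by_contra hinf
  have hinf : {w ∈ spectrum ℂ (S + R) | u' ≤ w.re}.Infinite := hinf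
  have hcomp : IsCompact {w ∈ spectrum ℂ (S + R) | u' ≤ w.re} :=
    (spectrum.isCompact (𝕜 := ℂ) (S + R)).inter_right
      (isClosed_le continuous_const Complex.continuous_re)
  obtain ⟨w0, hw0, hacc⟩ := hinf.exists_accPt_of_subset_isCompact hcomp subset_rfl
  have hfreq : ∃ᶠ z in nhdsWithin w0 {w0}ᶜ, g z = 0 := by
    rw [accPt_iff_frequently_nhdsNE] at hacc
    refine hacc.mono ?_
    intro z hz'
    exact hz z (lt_of_lt_of_le huu hz'.2) hz'.1
  have hpre : IsPreconnected {w : ℂ | u < w.re} := (convex_halfSpace_re_gt u).isPreconnected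
  have hzero := hga.eqOn_zero_of_preconnected_of_frequently_eq_zero hpre
    (lt_of_lt_of_le huu hw0.2) hfreq
  -- large point
  set W : ℂ := ((u + ‖R‖ + 1 : ℝ) : ℂ) with hW
  have hWre : W.re = u + ‖R‖ + 1 := Complex.ofReal_re _
  have hWu : u < W.re := by rw [hWre]; linarith [norm_nonneg R]
  have hgW : g W = 0 := hzero hWu
  have hinj : Function.Injective (Lw W) := by
    rw [injective_iff_map_eq_zero]
    intro y hy
    have hy1 : (y : H) = K W y := by
      have := congrArg Subtype.val hy
      rw [hLwa] at this
      exact sub_eq_zero.1 this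
    have h1 := aux_coercive_lower S u hS W (resolvent S W (y : H))
    have h2 : (algebraMap ℂ (H →L[ℂ] H) W - S) (resolvent S W (y : H)) = y := by
      have := congrArg (fun f : H →L[ℂ] H => f (y : H)) (hmulres W hWu).2
      exact this
    rw [h2, hWre] at h1
    have h3 : ‖(y : H)‖ ≤ ‖R‖ * ‖resolvent S W (y : H)‖ := by
      conv_lhs => rw [hy1]
      exact R.le_opNorm _
    have h4 : ‖resolvent S W (y : H)‖ ≤ 0 := by nlinarith
    have h5 : ‖(y : H)‖ ≤ 0 := by
      have := norm_nonneg R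
      nlinarith [norm_nonneg (resolvent S W (y : H))]
    apply Subtype.ext
    exact norm_le_zero_iff.1 h5
  have : IsUnit (Lw W) := by
    rw [Module.End.isUnit_iff]
    exact ⟨hinj, LinearMap.injective_iff_surjective.1 hinj⟩
  exact ((LinearMap.isUnit_iff_isUnit_det _).1 this).ne_zero hgW

lemma aux_fin (S : H →L[ℂ] H) (s : Finset H) (u u' : ℝ) (huu : u < u')
    (hS : ∀ x, ‖x‖ = 1 → (∀ y ∈ s, ⟪y, x⟫ = 0) → (⟪x, S x⟫).re ≤ u) :
    {w ∈ spectrum ℂ S | u' ≤ w.re}.Finite := by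
  set F : Submodule ℂ H := Submodule.span ℂ (s : Set H) with hF
  have : FiniteDimensional ℂ F := FiniteDimensional.span_finset ℂ s
  have hS' : ∀ x ∈ Fᗮ, (⟪x, S x⟫).re ≤ u * ‖x‖ ^ 2 := by
    intro x hx
    rcases eq_or_ne x 0 with h0 | h0
    · simp [h0]
    have hn : 0 < ‖x‖ := norm_pos_iff.2 h0
    have := hS (((‖x‖⁻¹ : ℝ) : ℂ) • x) (by
      rw [norm_smul, Complex.norm_real, Real.norm_of_nonneg (by positivity), inv_mul_cancel₀ hn.ne']) (by
      intro y hy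
      rw [inner_smul_right, (Submodule.mem_orthogonal _ _).1 hx y (Submodule.subset_span hy), mul_zero])
    rw [map_smul, inner_smul_left, inner_smul_right, Complex.conj_ofReal, ← mul_assoc,
      ← Complex.ofReal_mul, Complex.re_ofReal_mul] at this
    have h2 : (⟪x, S x⟫).re = ‖x‖ ^ 2 * (‖x‖⁻¹ * ‖x‖⁻¹ * (⟪x, S x⟫).re) := by
      field_simp
    rw [h2, mul_comm u]
    gcongr
  set P := F.starProjection with hP
  set Q := Fᗮ.starProjection with hQ
  set S1 : H →L[ℂ] H := Q * S * Q + (u : ℂ) • P with hS1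
  have hPQ : ∀ x, P x + Q x = x := by
    intro x
    rw [hQ, Submodule.starProjection_orthogonal]
    simp [hP]
  set Y : Submodule ℂ H := F ⊔ F.map (S : H →ₗ[ℂ] H) with hY
  have hfin := aux_fin_rank S1 (S - S1) u u' huu (by
    intro x
    have e1 : ⟪x, S1 x⟫ = ⟪Q x, S (Q x)⟫ + u * ⟪P x, P x⟫ := by
      have a1 : S1 x = Q (S (Q x)) + (u:ℂ) • P x := rfl
      rw [a1, inner_add_right, inner_smul_right, hQ, Submodule.inner_starProjection_left_eq_right]
      congr 2
      rw [hP, Submodule.inner_starProjection_left_eq_right]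
      congr 1
      have := Submodule.starProjection_eq_self_iff.2 (Submodule.starProjection_apply_mem F x)
      exact this.symm
    rw [e1, Complex.add_re, Complex.re_ofReal_mul, aux_re_self]
    have e2 := hS' (Q x) (Submodule.starProjection_apply_mem _ _)
    have e3 := Submodule.norm_sq_eq_add_norm_sq_starProjection x F
    rw [← hP, ← hQ] at e3
    rw [e3]
    linarith) Y (by
    intro x
    have : (S - S1) x = (P (S (Q x)) - (u:ℂ) • P x) + S (P x) := by
      have a1 : (S - S1) x = S x - (Q (S (Q x)) + (u:ℂ) • P x) := rfl
      rw [a1]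
      have a2 : S x = S (P x) + S (Q x) := by rw [← map_add, hPQ]
      have a3 := hPQ (S (Q x))
      rw [a2]
      nth_rewrite 1 [← a3]
      abel
    rw [this]
    apply Submodule.add_mem_sup
    · exact Submodule.sub_mem _ (Submodule.starProjection_apply_mem _ _)
        (Submodule.smul_mem _ _ (Submodule.starProjection_apply_mem _ _))
    · exact Submodule.mem_map_of_mem (Submodule.starProjection_apply_mem _ _))
  rwa [add_sub_cancel] at hfin
end spectral

section hull
variable {H : Type*} [NormedAddCommGroup H] [InnerProductSpace ℂ H] [CompleteSpace H]

open Polynomial in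
lemma aux_hull [Nontrivial H] (T : H →L[ℂ] H) (p : Polynomial ℂ) (u : ℝ)
    (hfin : {w ∈ spectrum ℂ (aeval T p) | u ≤ w.re}.Finite) (z : ℂ)
    (hz : z ∈ polyHull (spectrum ℂ T)) (hzu : u < (p.eval z).re) :
    p.eval z ∈ spectrum ℂ (aeval T p) := by
  by_contra hcon
  set Sp := spectrum ℂ (aeval T p) with hSp
  set B := ‖aeval T p‖ with hB
  have hBn : ∀ w ∈ Sp, ‖w‖ ≤ B := fun w hw => spectrum.norm_le_norm_of_mem hw
  set Z := hfin.toFinset with hZ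
  set v := p.eval z with hv
  have hB0 : 0 ≤ B := norm_nonneg _
  obtain ⟨R, hR1, hR2, hR3⟩ : ∃ R : ℝ, B ≤ R ∧ 0 < u + R ∧ B ^ 2 < (v.re - u) * (v.re + u + 2 * R) := by
    have hd : 0 < v.re - u := by linarith
    have e1 : ∀ᶠ R : ℝ in atTop, B ≤ R := eventually_ge_atTop B
    have e2 : ∀ᶠ R : ℝ in atTop, -u < R := eventually_gt_atTop _
    have e3 : ∀ᶠ R : ℝ in atTop, (B ^ 2 / (v.re - u) - v.re - u)/2 < R := eventually_gt_atTop _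
    obtain ⟨R, h1, h2, h3⟩ := (e1.and (e2.and e3)).exists
    refine ⟨R, h1, by linarith, ?_⟩
    have : B ^ 2 / (v.re - u) < v.re + u + 2 * R := by linarith
    rw [div_lt_iff₀ hd] at this
    linarith
  set ρ := Real.sqrt ((u + R) ^ 2 + B ^ 2) with hρ
  set τ := v.re + R with hτ
  have hτ0 : 0 < τ := by simp only [hτ]; linarith
  have hρτ : ρ < τ := by
    rw [hρ, Real.sqrt_lt' hτ0, hτ]
    nlinarith
  have hρ0 : 0 ≤ ρ := Real.sqrt_nonneg _
  have hvτ : τ ≤ ‖v + R‖ := by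
    have := Complex.re_le_norm (v + R)
    simpa [hτ] using this
  have hwρ : ∀ w ∈ Sp, w.re < u → ‖w + R‖ ≤ ρ := by
    intro w hw hwu
    rw [hρ, ← Real.sqrt_sq (norm_nonneg (w + R))]
    apply Real.sqrt_le_sqrt
    rw [← Complex.normSq_eq_norm_sq, Complex.normSq_apply]
    have i1 := Complex.abs_im_le_norm w
    have i2 := Complex.abs_re_le_norm w
    have i3 := hBn w hw
    have i4 := abs_le.1 (i2.trans i3)
    have i5 : w.im ^ 2 ≤ B ^ 2 := sq_le_sq' (abs_le.1 (i1.trans i3)).1 (abs_le.1 (i1.trans i3)).2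
    simp only [Complex.add_re, Complex.ofReal_re, Complex.add_im, Complex.ofReal_im, add_zero]
    nlinarith [i4.1, i4.2]
  set d := ∏ s ∈ Z, ‖v - s‖ with hd
  have hd0 : 0 < d := by
    apply Finset.prod_pos
    intro s hs
    rw [norm_pos_iff, sub_ne_zero]
    rintro h
    apply hcon
    rw [h]
    exact ((Set.Finite.mem_toFinset _).1 hs).1
  set D := (2 * B) ^ Z.card with hD
  obtain ⟨k, hk⟩ : ∃ k : ℕ, ρ ^ k * D < τ ^ k * d := by
    have h1 : Tendsto (fun k : ℕ => (ρ / τ) ^ k * D) atTop (nhds (0 * D)) :=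
      (tendsto_pow_atTop_nhds_zero_of_lt_one (by positivity) ((div_lt_one hτ0).2 hρτ)).mul_const D
    rw [zero_mul] at h1
    obtain ⟨k, hk⟩ := (h1.eventually_lt_const hd0).exists
    refine ⟨k, ?_⟩
    rw [div_pow, div_mul_eq_mul_div, div_lt_iff₀ (by positivity)] at hk
    linarith
  set G : Polynomial ℂ := (X + C (R:ℂ)) ^ k * ∏ s ∈ Z, (X - C s) with hG
  have hGe : ∀ w, ‖G.eval w‖ = ‖w + R‖ ^ k * ∏ s ∈ Z, ‖w - s‖ := by
    intro w
    simp [hG, eval_prod]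
  have h := hz (G.comp p)
  have hle : sSup ((fun w => ‖(G.comp p).eval w‖) '' spectrum ℂ T) ≤ ρ ^ k * D := by
    apply Real.sSup_le
    · rintro _ ⟨μ, hμ, rfl⟩
      have hpμ : p.eval μ ∈ Sp := spectrum.subset_polynomial_aeval T p ⟨μ, hμ, rfl⟩
      simp only [eval_comp]
      rw [hGe]
      by_cases hu : u ≤ (p.eval μ).re
      · have hm : p.eval μ ∈ Z := (Set.Finite.mem_toFinset _).2 ⟨hpμ, hu⟩
        rw [Finset.prod_eq_zero hm (by simp), mul_zero]
        positivity
      · push Not at hu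
        have j1 := hwρ _ hpμ hu
        have j2 : ∏ s ∈ Z, ‖p.eval μ - s‖ ≤ D := by
          rw [hD, ← Finset.prod_const]
          apply Finset.prod_le_prod <;> intro s hs
          · positivity
          · have := hBn s ((Set.Finite.mem_toFinset _).1 hs).1
            have := hBn _ hpμ
            calc _ ≤ ‖p.eval μ‖ + ‖s‖ := norm_sub_le _ _
              _ ≤ 2 * B := by linarith
        gcongr
    · positivity
  rw [eval_comp, hGe, ← hv] at h
  have : τ ^ k * d ≤ ‖v + R‖ ^ k * d := by gcongr
  linarith

open Polynomial in
lemma aux_key (hdim : ¬ FiniteDimensional ℂ H) (T : H →L[ℂ] H)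
    (hσ : Metric.closedBall (0 : ℂ) 1 ⊆ polyHull (spectrum ℂ T)) (n : ℕ) (c : Fin n → ℂ)
    (z : ℂ) (hz : ‖z‖ ≤ 1) (s : Finset H) (u : ℝ) (hu : u < (∑ j, c j * z ^ (j.val+1)).re) :
    ∃ x : H, ‖x‖ = 1 ∧ (∀ y ∈ s, ⟪y, x⟫ = 0) ∧
      u < (∑ j, c j * auxLam T n x j).re := by
  have hnt : Nontrivial H := by
    by_contra h
    rw [not_nontrivial_iff_subsingleton] at h
    exact hdim inferInstance
  by_cases hc : c = 0
  · subst hc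
    simp at hu
    set F : Submodule ℂ H := Submodule.span ℂ (s : Set H) with hF
    have hFd : FiniteDimensional ℂ F := FiniteDimensional.span_finset ℂ s
    have hne : Fᗮ ≠ ⊥ := by
      intro h
      rw [Submodule.orthogonal_eq_bot_iff] at h
      rw [h] at hFd
      exact hdim (Module.Finite.equiv (Submodule.topEquiv (R := ℂ) (M := H)))
    obtain ⟨x, hx, hx0⟩ := Submodule.exists_mem_ne_zero_of_ne_bot hne
    have hn : 0 < ‖x‖ := norm_pos_iff.2 hx0
    refine ⟨((‖x‖⁻¹ : ℝ) : ℂ) • x, ?_, ?_, by simpa using hu⟩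
    · rw [norm_smul, Complex.norm_real, Real.norm_of_nonneg (by positivity), inv_mul_cancel₀ hn.ne']
    · intro y hy
      rw [inner_smul_right, (Submodule.mem_orthogonal _ _).1 hx y (Submodule.subset_span hy), mul_zero]
  obtain ⟨j0, hj0⟩ : ∃ j, c j ≠ 0 := by
    by_contra h; push Not at h; exact hc (funext h)
  set p : Polynomial ℂ := ∑ j : Fin n, C (c j) * X ^ (j.val+1) with hp
  have hpe : ∀ w, p.eval w = ∑ j, c j * w ^ (j.val+1) := by
    intro w; simp [hp, eval_finset_sum]
  have hpc : p.coeff (j0.val+1) = c j0 := by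
    simp only [hp, finset_sum_coeff, coeff_C_mul, coeff_X_pow]
    rw [Finset.sum_eq_single j0]
    · simp
    · intro b _ hb
      have : j0.val ≠ b.val := fun h => hb (Fin.ext h.symm)
      simp [this]
    · simp
  have hpT : ∀ x, ⟪x, (aeval T p) x⟫ = ∑ j, c j * auxLam T n x j := by
    intro x
    simp only [hp, map_sum, map_mul, aeval_C, map_pow, aeval_X, auxLam,
      ContinuousLinearMap.sum_apply, inner_sum]
    refine Finset.sum_congr rfl fun j _ => ?_
    rw [Algebra.algebraMap_eq_smul_one, smul_mul_assoc, one_mul, ContinuousLinearMap.smul_apply,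
      inner_smul_right]
  by_contra hcon
  push Not at hcon
  rw [← hpe] at hu
  obtain ⟨u', hu1, hu2⟩ := exists_between hu
  have hfin := aux_fin (aeval T p) s u u' hu1 (by
    intro x h1 h2
    rw [hpT]
    exact hcon x h1 h2)
  have hcont : Continuous (fun w : ℂ => (p.eval w).re) :=
    Complex.continuous_re.comp p.continuous
  have hAo : IsOpen {w : ℂ | u' < (p.eval w).re} := isOpen_lt continuous_const hcont
  have hzc : z ∈ closure (Metric.ball (0:ℂ) 1) := by
    rw [closure_ball _ one_ne_zero]; simpa using hz
  obtain ⟨z', hz'1, hz'2⟩ := mem_closure_iff.1 hzc _ hAo hu2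
  have hinf : ({w : ℂ | u' < (p.eval w).re} ∩ Metric.ball (0:ℂ) 1).Infinite :=
    infinite_of_mem_nhds z' ((hAo.inter Metric.isOpen_ball).mem_nhds ⟨hz'1, hz'2⟩)
  apply hinf
  have hfin2 : (⋃ w ∈ {w ∈ spectrum ℂ (aeval T p) | u' ≤ w.re}, {ζ : ℂ | (p - C w).IsRoot ζ}).Finite := by
    apply hfin.biUnion
    intro w _
    apply Polynomial.finite_setOf_isRoot
    intro h0
    have := congrArg (fun q => q.coeff (j0.val+1)) h0
    simp only [coeff_sub, hpc, coeff_zero, coeff_C_succ, sub_zero] at this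
    exact hj0 this
  refine hfin2.subset ?_
  rintro w ⟨hw1, hw2⟩
  simp only [Set.mem_iUnion]
  refine ⟨p.eval w, ⟨aux_hull T p u' hfin w (hσ (Metric.ball_subset_closedBall hw2)) hw1, le_of_lt hw1⟩, ?_⟩
  simp [IsRoot]

/-- The moment curve over the closed disc lies in the essential numerical range. -/
lemma aux_disc_mem (hdim : ¬ FiniteDimensional ℂ H) (T : H →L[ℂ] H)
    (hσ : Metric.closedBall (0 : ℂ) 1 ⊆ polyHull (spectrum ℂ T)) (n : ℕ)
    (z : ℂ) (hz : ‖z‖ ≤ 1) : (fun j : Fin n => z ^ (j.val+1)) ∈ auxEss T n := by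
  classical
  by_contra hcon
  obtain ⟨f, u, hf1, hf2⟩ := geometric_hahn_banach_closed_point (aux_ess_convex T n)
    (aux_ess_closed T n) hcon
  -- coefficients of the functional
  set c : Fin n → ℂ := fun j => (f (Pi.single j 1) : ℂ) - (f (Pi.single j Complex.I) : ℂ) * Complex.I with hc
  have hfc : ∀ v : Fin n → ℂ, f v = (∑ j, c j * v j).re := by
    intro v
    have h1 : v = ∑ j, ((v j).re • (Pi.single j (1:ℂ) : Fin n → ℂ) + (v j).im • (Pi.single j Complex.I : Fin n → ℂ)) := by
      funext i
      simp only [Finset.sum_apply, Pi.add_apply, Pi.smul_apply, Pi.single_apply, smul_ite, smul_zero]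
      rw [Finset.sum_add_distrib]
      simp
    conv_lhs => rw [h1]
    rw [map_sum, Complex.re_sum]
    refine Finset.sum_congr rfl fun j _ => ?_
    rw [map_add, map_smul, map_smul]
    simp [hc]
    ring
  set Qs : Finset H → Set (Fin n → ℂ) := fun s =>
    closure {v | ∃ x : H, ‖x‖ = 1 ∧ (∀ y ∈ s, ⟪y, x⟫ = 0) ∧ auxLam T n x = v ∧ u ≤ f v} with hQs
  have hmono : ∀ s t : Finset H, s ⊆ t → Qs t ⊆ Qs s := by
    intro s t hst
    apply closure_mono
    rintro v ⟨x, h1, h2, h3⟩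
    exact ⟨x, h1, fun y hy => h2 y (hst hy), h3⟩
  have hbdd : ∀ x : H, ‖x‖ = 1 → ‖auxLam T n x‖ ≤ ∑ j : Fin n, ‖T ^ (j.val+1)‖ := by
    intro x hx
    rw [pi_norm_le_iff_of_nonneg (by positivity)]
    intro j
    calc ‖auxLam T n x j‖ ≤ ‖x‖ * ‖(T ^ (j.val+1)) x‖ := norm_inner_le_norm _ _
      _ ≤ ‖x‖ * (‖T ^ (j.val+1)‖ * ‖x‖) := by gcongr; exact ContinuousLinearMap.le_opNorm _ _
      _ = ‖T ^ (j.val+1)‖ := by rw [hx]; ring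
      _ ≤ _ := Finset.single_le_sum (f := fun j : Fin n => ‖T ^ (j.val+1)‖) (fun _ _ => norm_nonneg _) (Finset.mem_univ j)
  obtain ⟨v, hv⟩ := IsCompact.nonempty_iInter_of_directed_nonempty_isCompact_isClosed Qs
    (fun s t => ⟨s ∪ t, hmono _ _ Finset.subset_union_left, hmono _ _ Finset.subset_union_right⟩)
    (fun s => by
      obtain ⟨x, h1, h2, h3⟩ := aux_key hdim T hσ n c z hz s u (by rw [← hfc]; exact hf2)
      exact ⟨_, subset_closure ⟨x, h1, h2, rfl, by rw [hfc]; exact h3.le⟩⟩)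
    (fun s => by
      apply Metric.isCompact_of_isClosed_isBounded isClosed_closure
      apply Bornology.IsBounded.closure
      rw [isBounded_iff_forall_norm_le]
      refine ⟨∑ j : Fin n, ‖T ^ (j.val+1)‖, ?_⟩
      rintro v ⟨x, h1, _, rfl, _⟩
      exact hbdd x h1)
    (fun s => isClosed_closure)
  rw [Set.mem_iInter] at hv
  have hvE : v ∈ auxEss T n := by
    intro s ε hε
    obtain ⟨w, ⟨x, h1, h2, rfl, h4⟩, hd⟩ := Metric.mem_closure_iff.1 (hv s) ε hε
    refine ⟨x, h1, h2, ?_⟩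
    rw [dist_eq_norm, norm_sub_rev] at hd
    exact hd
  have hfv : u ≤ f v := by
    have : Qs ∅ ⊆ {v | u ≤ f v} := by
      apply closure_minimal
      · rintro v ⟨x, _, _, _, h⟩; exact h
      · exact isClosed_le continuous_const f.continuous
    exact this (hv ∅)
  have := hf1 v hvE
  linarith

lemma aux_disc_nhds (hdim : ¬ FiniteDimensional ℂ H) (T : H →L[ℂ] H)
    (hσ : Metric.closedBall (0 : ℂ) 1 ⊆ polyHull (spectrum ℂ T)) (n : ℕ) (hn : 1 ≤ n)
    (z : ℂ) (hz : ‖z‖ < 1) : auxEss T n ∈ nhds (fun j : Fin n => z ^ (j.val+1)) := by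
  have hn0 : (0:ℝ) < n := by exact_mod_cast hn
  rw [Metric.nhds_basis_closedBall.mem_iff]
  refine ⟨(1 - ‖z‖) / (16 * n), div_pos (by linarith) (by positivity), ?_⟩
  intro v hv
  rw [mem_closedBall_iff_norm] at hv
  obtain ⟨N, w, B, h1, h2, h3⟩ := aux_povm (L := ℂ) n hn (z • 1) ‖z‖ (by
      rw [norm_smul]; simp) hz
    (fun j => (v j - z ^ (j.val+1)) • 1) (by
      intro j
      rw [norm_smul]
      simp only [norm_one, mul_one]
      exact (norm_le_pi_norm (v - fun j : Fin n => z ^ (j.val+1)) j).trans hv)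
  set t : Fin N → ℝ := fun i => ‖B i 1‖ ^ 2 with ht
  have hBt : ∀ i, ((ContinuousLinearMap.adjoint (B i)) ∘L (B i)) 1 = (t i : ℂ) := by
    intro i
    have := ContinuousLinearMap.adjoint_inner_right (B i) (1:ℂ) (B i 1)
    rw [inner_self_eq_norm_sq_to_K] at this
    simp only [RCLike.inner_apply, map_one, mul_one] at this
    simp only [ContinuousLinearMap.comp_apply, this, ht]
    simp
  have hsum : ∑ i, t i = 1 := by
    have := congrArg (fun f : ℂ →L[ℂ] ℂ => f 1) h2
    simp only [ContinuousLinearMap.sum_apply, hBt, one_apply_eq_self] at this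
    exact_mod_cast this
  have hv' : v = ∑ i, t i • (fun j : Fin n => (w i) ^ (j.val+1)) := by
    funext j
    have := congrArg (fun f : ℂ →L[ℂ] ℂ => f 1) (h3 j)
    simp only [ContinuousLinearMap.sum_apply, ContinuousLinearMap.smul_apply, hBt,
      ContinuousLinearMap.add_apply, smul_pow, one_pow, one_apply_eq_self, smul_eq_mul, mul_one] at this
    rw [add_sub_cancel] at this
    rw [← this]
    simp only [Finset.sum_apply, Pi.smul_apply, Complex.real_smul]
    exact Finset.sum_congr rfl fun i _ => mul_comm _ _
  rw [hv']
  exact (aux_ess_convex T n).sum_mem (fun i _ => by positivity) hsum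
    (fun i _ => aux_disc_mem hdim T hσ n (w i) (h1 i).le)
end hull

section final

lemma aux_countable {L : Type*} [NormedAddCommGroup L] [InnerProductSpace ℂ L]
    [TopologicalSpace.SeparableSpace L] {ι : Type*} (b : ι → L) (hb : Orthonormal ℂ b) :
    Countable ι := by
  have hd : Pairwise (Function.onFun Disjoint fun i => Metric.ball (b i) (1/2)) := by
    intro i j hij
    apply Metric.ball_disjoint_ball
    have h2 : ‖b i - b j‖ ^ 2 = 2 := by
      rw [@norm_sub_sq ℂ, hb.2 hij, hb.1, hb.1]; norm_num
    rw [dist_eq_norm]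
    nlinarith [norm_nonneg (b i - b j)]
  exact hd.countable_of_isOpen_disjoint (fun i => Metric.isOpen_ball)
    (fun i => ⟨b i, Metric.mem_ball_self (by norm_num)⟩)

lemma aux_isom {H L : Type*} [NormedAddCommGroup L] [InnerProductSpace ℂ L]
    [NormedAddCommGroup H] [InnerProductSpace ℂ H] [CompleteSpace H]
    {ι : Type*} (b : HilbertBasis ι ℂ L) (v : ι → H) (hv : Orthonormal ℂ v) :
    ∃ V : L →ₗᵢ[ℂ] H, ∀ k, V (b k) = v k := by
  classical
  refine ⟨(OrthogonalFamily.linearIsometry hv.orthogonalFamily).comp b.repr.toLinearIsometry, ?_⟩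
  intro k
  have h1 : hv.orthogonalFamily.linearIsometry (lp.single 2 k (1 : ℂ)) = v k := by
    refine (OrthogonalFamily.linearIsometry_apply_single hv.orthogonalFamily (1 : ℂ)).trans ?_
    exact one_smul ℂ (v k)
  rw [← b.repr_self] at h1
  exact h1

lemma aux_op_ext {L : Type*} [NormedAddCommGroup L] [InnerProductSpace ℂ L]
    {ι : Type*} (b : HilbertBasis ι ℂ L) (S R : L →L[ℂ] L)
    (h : ∀ k l, ⟪b k, S (b l)⟫ = ⟪b k, R (b l)⟫) : S = R := by
  have hd : Dense (Submodule.span ℂ (Set.range b) : Set L) := by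
    rw [Submodule.dense_iff_topologicalClosure_eq_top]; exact b.dense_span
  apply ContinuousLinearMap.ext_on hd
  rintro _ ⟨l, rfl⟩
  apply b.repr.injective
  ext k
  rw [b.repr_apply_apply, b.repr_apply_apply, h]

lemma aux_final {H : Type*} [NormedAddCommGroup H] [InnerProductSpace ℂ H]
    [CompleteSpace H]
    (hdim : ¬ FiniteDimensional ℂ H)
    (T : H →L[ℂ] H) (hσ : Metric.closedBall (0 : ℂ) 1 ⊆ polyHull (spectrum ℂ T))
    (n : ℕ) (hn : 1 ≤ n)
    {L : Type*} [NormedAddCommGroup L] [InnerProductSpace ℂ L] [CompleteSpace L]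
    [TopologicalSpace.SeparableSpace L] [Nontrivial L]
    (N : ℕ) (z : Fin N → ℂ) (hz : ∀ i, ‖z i‖ < 1) (B : Fin N → L →L[ℂ] L)
    (hB : ∑ i, (ContinuousLinearMap.adjoint (B i)) ∘L (B i) = 1) :
    ∃ U : L →ₗᵢ[ℂ] H, ∀ j ≤ n, ∀ u v,
      ⟪U u, (T ^ j) (U v)⟫ =
        ⟪u, (∑ i, (z i) ^ j • ((ContinuousLinearMap.adjoint (B i)) ∘L (B i))) v⟫ := by
  have hN : 0 < N := by
    rcases Nat.eq_zero_or_pos N with h | h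
    · subst h
      simp at hB
    · exact h
  obtain ⟨x, hx1, hx2⟩ := aux_seq T n
    (fun m x => ‖x‖ = 1 ∧
      auxLam T n x = fun j : Fin n => (z ⟨m % N, Nat.mod_lt _ hN⟩) ^ (j.val+1)) (by
    intro m s
    obtain ⟨X, h1, h2, h3⟩ := aux_exact T n _
      (aux_disc_nhds hdim T hσ n hn (z ⟨m % N, Nat.mod_lt _ hN⟩) (hz _)) s
    exact ⟨X, ⟨h1, h3⟩, h2⟩)
  have hxx : ∀ m, ∀ j ≤ n, ⟪x m, (T ^ j) (x m)⟫ = (z ⟨m % N, Nat.mod_lt _ hN⟩) ^ j := by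
    intro m j hj
    rcases j with _ | j
    · simp [inner_self_eq_norm_sq_to_K, (hx1 m).1]
    · have := congrFun (hx1 m).2 ⟨j, hj⟩
      exact this
  obtain ⟨w, b, -⟩ := exists_hilbertBasis ℂ L
  have hcount : Countable w := aux_countable b b.orthonormal
  obtain ⟨e, he⟩ := exists_injective_nat w
  have hidx : ∀ (i l : Fin N) (k m : w), N * e k + i.val = N * e m + l.val → i = l ∧ k = m := by
    intro i l k m h
    have h1 : (N * e k + i.val) % N = (N * e m + l.val) % N := by rw [h]
    rw [Nat.mul_add_mod, Nat.mul_add_mod, Nat.mod_eq_of_lt i.2, Nat.mod_eq_of_lt l.2] at h1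
    refine ⟨Fin.ext h1, he ?_⟩
    rw [h1] at h
    exact Nat.eq_of_mul_eq_mul_left hN (Nat.add_right_cancel h)
  have hmod : ∀ (i : Fin N) (k : w),
      (⟨(N * e k + i.val) % N, Nat.mod_lt _ hN⟩ : Fin N) = i := by
    intro i k
    apply Fin.ext
    simp [Nat.mul_add_mod, Nat.mod_eq_of_lt i.2]
  have horth : ∀ i : Fin N, Orthonormal ℂ (fun k : w => x (N * e k + i.val)) := by
    intro i
    refine ⟨fun k => (hx1 _).1, ?_⟩
    intro k m hkm
    have := hx2 (N * e k + i.val) (N * e m + i.val) (fun h => hkm (hidx i i k m h).2) 0 (Nat.zero_le _)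
    simpa using this
  choose V hV using fun i => aux_isom b _ (horth i)
  have hVV : ∀ i l : Fin N, ∀ j ≤ n, ∀ u v : L,
      ⟪V i u, (T ^ j) (V l v)⟫ = if i = l then (z i) ^ j * ⟪u, v⟫ else 0 := by
    intro i l j hj u v
    have key : (ContinuousLinearMap.adjoint (V i).toContinuousLinearMap) ∘L (T ^ j) ∘L
        (V l).toContinuousLinearMap = (if i = l then (z i) ^ j else 0) • (1 : L →L[ℂ] L) := by
      apply aux_op_ext b
      intro k m
      simp only [ContinuousLinearMap.comp_apply, ContinuousLinearMap.adjoint_inner_right,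
        LinearIsometry.coe_toContinuousLinearMap, hV, smul_apply,
        one_apply_eq_self, inner_smul_right]
      by_cases hil : i = l
      · subst hil
        by_cases hkm : k = m
        · subst hkm
          rw [hxx _ j hj, hmod]
          simp [inner_self_eq_norm_sq_to_K, b.orthonormal.1]
        · rw [hx2 _ _ (fun h => hkm (hidx i i k m h).2) j hj, b.orthonormal.2 hkm, mul_zero]
      · rw [hx2 _ _ (fun h => hil (hidx i l k m h).1) j hj]
        simp [hil]
    have h2 := congrArg (fun f : L →L[ℂ] L => ⟪u, f v⟫) key
    simp only [ContinuousLinearMap.comp_apply, ContinuousLinearMap.adjoint_inner_right,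
        LinearIsometry.coe_toContinuousLinearMap, smul_apply,
        one_apply_eq_self, inner_smul_right] at h2
    rw [h2]
    split_ifs <;> simp
  set U0 : L →ₗ[ℂ] H := ∑ i, (V i).toLinearMap ∘ₗ (B i).toLinearMap with hU0
  have hU0a : ∀ u, U0 u = ∑ i, V i (B i u) := by
    intro u; simp [hU0]
  have hmain : ∀ j ≤ n, ∀ u v, ⟪U0 u, (T ^ j) (U0 v)⟫ =
        ⟪u, (∑ i, (z i) ^ j • ((ContinuousLinearMap.adjoint (B i)) ∘L (B i))) v⟫ := by
    intro j hj u v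
    rw [hU0a, hU0a, map_sum, sum_inner, sum_apply, inner_sum]
    refine Finset.sum_congr rfl fun i _ => ?_
    rw [inner_sum]
    simp only [hVV _ _ j hj, Finset.sum_ite_eq, Finset.mem_univ, if_true]
    rw [smul_apply, inner_smul_right, ContinuousLinearMap.comp_apply,
      ContinuousLinearMap.adjoint_inner_right]
  have hiso : ∀ u, ‖U0 u‖ = ‖u‖ := by
    intro u
    have := hmain 0 (Nat.zero_le _) u u
    simp only [pow_zero, one_smul, hB, one_apply_eq_self, inner_self_eq_norm_sq_to_K] at this
    have h2 : ‖U0 u‖ ^ 2 = ‖u‖ ^ 2 := by exact_mod_cast this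
    exact (sq_eq_sq₀ (norm_nonneg _) (norm_nonneg _)).1 h2
  exact ⟨⟨U0, hiso⟩, hmain⟩

lemma aux_choose_r (n : ℕ) (hn : 1 ≤ n) (c : ℝ) (hc0 : 0 ≤ c) (hc1 : c < 1) (a : Fin n → ℝ)
    (ha : ∀ j, a j ≤ (1 - c) ^ n / (n * 2 ^ (2 * n + 4))) :
    ∃ r : ℝ, 0 < r ∧ r < 1 ∧ r⁻¹ * c < 1 ∧
      ∀ j : Fin n, (r⁻¹) ^ (j.val+1) * a j ≤ (1 - r⁻¹ * c) / (16 * n) := by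
  have hn0 : (0:ℝ) < n := by exact_mod_cast hn
  have ha' : ∀ j, a j < (1 - c) / (16 * n) := by
    intro j
    refine (ha j).trans_lt ?_
    have h1 : (1 - c) ^ n ≤ 1 - c := pow_le_of_le_one (by linarith) (by linarith) (by omega)
    have h2 : (64:ℝ) ≤ 2 ^ (2 * n + 4) := by
      calc (64:ℝ) = 2 ^ 6 := by norm_num
        _ ≤ _ := pow_le_pow_right₀ (by norm_num) (by omega)
    rw [div_lt_div_iff₀ (by positivity) (by positivity)]
    have h3 : (1 - c) ^ n * (16 * n) ≤ (1 - c) * (16 * n) := by gcongr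
    have h4 : (1 - c) * (n * 64) ≤ (1 - c) * (n * 2 ^ (2 * n + 4)) := by
      have : 0 ≤ 1 - c := by linarith
      gcongr
    have h5 : 0 < (1 - c) * n := mul_pos (by linarith) hn0
    nlinarith
  have hinv : Tendsto (fun r : ℝ => r⁻¹) (nhdsWithin 1 (Set.Iio 1)) (nhds 1) := by
    have : ContinuousAt (fun r : ℝ => r⁻¹) 1 := continuousAt_inv₀ one_ne_zero
    have h := this.tendsto
    rw [inv_one] at h
    exact h.mono_left nhdsWithin_le_nhds
  have e1 : ∀ᶠ r : ℝ in nhdsWithin 1 (Set.Iio 1), r < 1 := self_mem_nhdsWithin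
  have e0 : ∀ᶠ r : ℝ in nhdsWithin 1 (Set.Iio 1), 0 < r :=
    nhdsWithin_le_nhds (lt_mem_nhds one_pos)
  have e2 : ∀ᶠ r : ℝ in nhdsWithin 1 (Set.Iio 1), r⁻¹ * c < 1 := by
    have := hinv.mul_const c
    exact this.eventually_lt_const (by linarith)
  have e3 : ∀ᶠ r : ℝ in nhdsWithin 1 (Set.Iio 1),
      ∀ j : Fin n, (r⁻¹) ^ (j.val+1) * a j < (1 - r⁻¹ * c) / (16 * n) := by
    rw [eventually_all]
    intro j
    have t1 := (hinv.pow (j.val+1)).mul_const (a j)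
    have t2 := ((hinv.mul_const c).const_sub 1).div_const (16 * (n:ℝ))
    refine t1.eventually_lt t2 ?_
    simpa using ha' j
  obtain ⟨r, h1, h0, h2, h3⟩ := (e1.and (e0.and (e2.and e3))).exists
  exact ⟨r, h0, h1, h2, fun j => (h3 j).le⟩

end final

/-- If `σ̂(T) ⊇ 𝔻̄`, `‖C‖ < 1` and `‖A_j‖ ≤ (1 - ‖C‖)^n / (n 2^{2n+4})`, then there is
a closed subspace `K ⊂ H` (the range of a linear isometry `U : L → H`) such that the
compression of `(T, T², …, T^n)` to `K` is jointly unitarily equivalent to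
`(C + A_1, C² + A_2, …, C^n + A_n)`. -/
theorem stmt_17 {H : Type*} [NormedAddCommGroup H] [InnerProductSpace ℂ H]
    [CompleteSpace H] [TopologicalSpace.SeparableSpace H]
    (hdim : ¬ FiniteDimensional ℂ H)
    (T : H →L[ℂ] H) (hσ : Metric.closedBall (0 : ℂ) 1 ⊆ polyHull (spectrum ℂ T))
    (n : ℕ) (hn : 1 ≤ n)
    (L : Type*) [NormedAddCommGroup L] [InnerProductSpace ℂ L] [CompleteSpace L]
    [TopologicalSpace.SeparableSpace L] [Nontrivial L]
    (C : L →L[ℂ] L) (hC : ‖C‖ < 1)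
    (A : Fin n → L →L[ℂ] L)
    (hA : ∀ j, ‖A j‖ ≤ (1 - ‖C‖) ^ n / (n * 2 ^ (2 * n + 4))) :
    ∃ (K : Submodule ℂ H) (U : L →ₗᵢ[ℂ] H),
      IsClosed (K : Set H) ∧ Set.range U = (K : Set H) ∧
      ∀ (j : Fin n) (u v : L),
        ⟪(T ^ (j.val + 1)) (U u), U v⟫ = ⟪(C ^ (j.val + 1) + A j) u, v⟫ := by
  obtain ⟨r, hr0, hr1, hrc, hra⟩ := aux_choose_r n hn ‖C‖ (norm_nonneg _) hC (fun j => ‖A j‖) hA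
  have hrn : ‖((r⁻¹ : ℝ) : ℂ)‖ = r⁻¹ := by
    rw [Complex.norm_real, Real.norm_of_nonneg (by positivity)]
  obtain ⟨N, w, B, hw, hB1, hB2⟩ := aux_povm n hn (((r⁻¹ : ℝ) : ℂ) • C) (r⁻¹ * ‖C‖)
    (by rw [norm_smul, hrn]) hrc
    (fun j => ((r⁻¹ : ℝ) : ℂ) ^ (j.val+1) • A j) (by
      intro j
      rw [norm_smul, norm_pow, hrn]
      exact hra j)
  obtain ⟨U, hU⟩ := aux_final hdim T hσ n hn N (fun i => (r : ℂ) * w i) (by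
      intro i
      rw [norm_mul, hw, mul_one, Complex.norm_real, Real.norm_of_nonneg hr0.le]
      exact hr1) B hB1
  have hrC : (r : ℂ) ≠ 0 := by exact_mod_cast hr0.ne'
  refine ⟨LinearMap.range U.toLinearMap, U, ?_, ?_, ?_⟩
  · have h := U.isometry.isClosedEmbedding.isClosed_range
    exact h
  · rfl
  · intro j u v
    have h1 : ∑ i, ((r : ℂ) * w i) ^ (j.val+1) • ((ContinuousLinearMap.adjoint (B i)) ∘L (B i))
        = C ^ (j.val+1) + A j := by
      have h2 := congrArg (fun S => (r : ℂ) ^ (j.val+1) • S) (hB2 j)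
      simp only [Finset.smul_sum, smul_smul, ← mul_pow] at h2
      rw [h2, smul_pow, smul_add, smul_smul, smul_smul, ← mul_pow]
      simp [hrC]
    have h3 := hU (j.val+1) j.2 v u
    rw [h1] at h3
    rw [← inner_conj_symm, h3, inner_conj_symm]
end
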